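/- Let G be any plane graph on n ≥ 2 vertices and let T be any spanning tree of G. Then there exist two vertices u, v ∈ V(G) and a simple arc from u to v in the plane that does not cross any edge of G, such that the unique Jordan curve C consisting of this arc together with some edges of T (namely the arc plus the unique u–v path in T) has the property that the number of vertices of G lying in the open interior region of C is less than (2/3)n and the number of vertices of G lying in the open exterior region of C is less than (2/3)n. -/

import Mathlib

/-- The set of vertices on fire after `t` fire-spread rounds, when the fire breaks out
at `v` and the firefighters protect the vertices of `P s` in round `s + 1` (protection
happens just before the `s`-th spread step and is permanent). -/
def burnedSet {V : Type*} (G : SimpleGraph V) (v : V) (P : ℕ → Set V) : ℕ → Set V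
  | 0 => {v}
  | t + 1 => burnedSet G v P t ∪
      {w | (∃ u ∈ burnedSet G v P t, G.Adj u w) ∧ ∀ s ≤ t, w ∉ P s}

/-- A strategy `P` is valid for the per-round budgets `b` if in each round it protects
at most `b t` vertices, none of which are already on fire. -/
def ValidStrategy {V : Type*} (G : SimpleGraph V) (b : ℕ → ℕ) (v : V) (P : ℕ → Set V) : Prop :=
  ∀ t, (P t).Finite ∧ (P t).ncard ≤ b t ∧ Disjoint (P t) (burnedSet G v P t)

/-- `sn G b v` is the maximum number of vertices that can be saved (i.e. that never
catch fire) when the fire breaks out at `v` and the firefighters may protect at most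
`b t` vertices in round `t + 1`. -/
noncomputable def sn {V : Type*} (G : SimpleGraph V) (b : ℕ → ℕ) (v : V) : ℕ :=
  sSup {m | ∃ P, ValidStrategy G b v P ∧
    m = Nat.card {w : V | ∀ t, w ∉ burnedSet G v P t}}

/-- The surviving rate of `G` with per-round budgets `b` : the expected fraction of
vertices that can be saved when the starting vertex is chosen uniformly at random. -/
noncomputable def survivingRate {V : Type*} [Fintype V] (G : SimpleGraph V) (b : ℕ → ℕ) : ℝ :=
  (∑ v : V, (sn G b v : ℝ)) / (Fintype.card V : ℝ) ^ 2

/-- A plane embedding of a simple graph: vertices are points of the plane and edges are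
simple arcs between their endpoints, such that arcs avoid all other vertices and two
arcs of distinct edges meet only in common endpoints. -/
structure PlaneEmbedding {V : Type*} (G : SimpleGraph V) where
  pos : V → ℝ × ℝ
  arc : V → V → ℝ → ℝ × ℝ
  pos_inj : Function.Injective pos
  arc_cont : ∀ ⦃u v⦄, G.Adj u v → Continuous (arc u v)
  arc_injOn : ∀ ⦃u v⦄, G.Adj u v → Set.InjOn (arc u v) (Set.Icc 0 1)
  arc_zero : ∀ ⦃u v⦄, G.Adj u v → arc u v 0 = pos u
  arc_one : ∀ ⦃u v⦄, G.Adj u v → arc u v 1 = pos v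
  arc_symm : ∀ ⦃u v⦄, G.Adj u v → ∀ t, arc v u t = arc u v (1 - t)
  arc_avoid : ∀ ⦃u v⦄, G.Adj u v → ∀ w : V, pos w ∉ arc u v '' Set.Ioo 0 1
  arc_meet : ∀ ⦃u v x y⦄, G.Adj u v → G.Adj x y → s(u, v) ≠ s(x, y) →
      arc u v '' Set.Icc 0 1 ∩ arc x y '' Set.Icc 0 1 ⊆
        ({pos u, pos v} : Set (ℝ × ℝ)) ∩ {pos x, pos y}

/-- A graph is planar if it admits a plane embedding. -/
def IsPlanar {V : Type*} (G : SimpleGraph V) : Prop :=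
  Nonempty (PlaneEmbedding G)

/-!
Call a set *heavy* if it contains at least two thirds of the vertices, and call an arc between two
vertices that does not cross the drawing a *chord*. Suppose that every cycle formed by a chord and a
path of `T` has a heavy side. Among all such cycles with a heavy side `D`, choose one that
minimizes, lexicographically, the number of vertices in `D`, the length of the path of `T`, and the
number of edges that meet `D`. Let `F ⊆ D` be a face, bordering the chord, of the graph with the
chord added.

* If some vertex `w` other than the ends of the chord lies on the boundary of `F`, join `w` to a
  point of the chord within `F`, and join `w` to the path by `T`. This yields a theta curve, two of
  whose cycles are new. Each of the three cycles has a heavy side; as three heavy sides that miss a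
  common vertex always share another vertex, a heavy side of one of the new cycles avoids the third
  arc of the theta curve. This side lies in `D`, and the new cycle is smaller.
* Otherwise `F` is bounded by the chord and by one edge `uv` between its ends. This edge is not in
  `T`, since otherwise `D = F` would contain no vertices. Pushing the chord across `uv` yields a
  cycle whose heavy side lies in `D` and is no longer met by `uv`.

The topology of the plane enters through Janiszewski's theorem, which follows from Borsuk's
criterion: a compact set `K ⊆ ℂ` does not separate `p` from `q` if and only if `(z - p) / (z - q)`
has a continuous logarithm on `K`. For theta curves one needs in addition that `K₃,₃` is not planar.
If the nine arcs from `aᵢ` to `bⱼ` were disjoint whenever they have no common index, then continuing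
the square roots of the differences `γᵢⱼ s - γₖₗ t` along the arcs would lead to `1 = -1`.
-/

namespace PlaneTopology

open Set Metric Topology
open scoped Function

section Region

variable {X : Type*} [TopologicalSpace X] {K L S : Set X} {p q r : X}

/-- The component of the complement of `K` that contains `p`; it is empty when `p ∈ K`. For a drawn
graph or a closed curve `K` in the plane these are the faces of `K`. -/
abbrev region (K : Set X) (p : X) : Set X :=
  connectedComponentIn Kᶜ p

lemma mem_region_self (hp : p ∉ K) : p ∈ region K p :=
  mem_connectedComponentIn hp

lemma isPreconnected_region (K : Set X) (p : X) : IsPreconnected (region K p) :=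
  isPreconnected_connectedComponentIn

lemma disjoint_region (K : Set X) (p : X) : Disjoint (region K p) K :=
  disjoint_left.mpr fun _ hx => connectedComponentIn_subset _ _ hx

lemma notMem_of_mem_region (h : q ∈ region K p) : q ∉ K :=
  disjoint_left.mp (disjoint_region K p) h

lemma base_notMem_of_mem_region (h : q ∈ region K p) : p ∉ K :=
  connectedComponentIn_nonempty_iff.mp ⟨q, h⟩

lemma region_eq (h : q ∈ region K p) : region K q = region K p :=
  (connectedComponentIn_eq h).symm

lemma mem_region_symm (h : q ∈ region K p) : p ∈ region K q :=
  region_eq h ▸ mem_region_self (base_notMem_of_mem_region h)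

lemma mem_region_trans (hpq : q ∈ region K p) (hqr : r ∈ region K q) : r ∈ region K p :=
  region_eq hpq ▸ hqr

lemma region_anti (hKL : K ⊆ L) (p : X) : region L p ⊆ region K p :=
  connectedComponentIn_mono p (compl_subset_compl.mpr hKL)

lemma subset_region (hS : IsPreconnected S) (hSK : Disjoint S K) (hqS : q ∈ S)
    (hq : q ∈ region K p) : S ⊆ region K p :=
  region_eq hq ▸ hS.subset_connectedComponentIn hqS (disjoint_left.mp hSK)

lemma mem_region_of_isPreconnected (hS : IsPreconnected S) (hSK : Disjoint S K) (hp : p ∈ S)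
    (hq : q ∈ S) : q ∈ region K p :=
  hS.subset_connectedComponentIn hp (disjoint_left.mp hSK) hq

lemma isOpen_region [LocallyConnectedSpace X] (hK : IsClosed K) (p : X) : IsOpen (region K p) :=
  hK.isOpen_compl.connectedComponentIn

lemma mem_region_of_mem_closure [LocallyConnectedSpace X] (hK : IsClosed K)
    (hq : q ∈ closure (region K p)) (hqK : q ∉ K) : q ∈ region K p := by
  obtain ⟨r, hrq, hrp⟩ := mem_closure_iff.mp hq _ (isOpen_region hK q) (mem_region_self hqK)
  exact mem_region_trans hrp (mem_region_symm hrq)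

lemma frontier_region_subset [LocallyConnectedSpace X] (hK : IsClosed K) (p : X) :
    frontier (region K p) ⊆ K := by
  intro q hq
  by_contra hqK
  exact hq.2 <| (isOpen_region hK p).interior_eq.symm ▸ mem_region_of_mem_closure hK hq.1 hqK

end Region

section ConnectedSets

lemma subset_of_disjoint_frontier {X : Type*} [TopologicalSpace X] {S U : Set X}
    (hS : IsPreconnected S) (hne : (S ∩ U).Nonempty) (hSU : Disjoint S (frontier U)) : S ⊆ U := by
  have hcover : S ⊆ interior U ∪ (closure U)ᶜ := fun x hx =>
    or_iff_not_imp_right.mpr fun h => by_contra fun h' => disjoint_left.mp hSU hx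
      ⟨not_not.mp h, h'⟩
  obtain ⟨x, hx, hxU⟩ := hne
  refine Subset.trans ?_ interior_subset
  refine hS.subset_left_of_subset_union isOpen_interior isClosed_closure.isOpen_compl
    (disjoint_compl_right.mono_left (interior_subset.trans subset_closure)) hcover
    ⟨x, hx, (hcover hx).resolve_right fun h => h (subset_closure hxU)⟩

lemma region_subset_of_frontier_subset {X : Type*} [TopologicalSpace X] {K U : Set X} {q : X}
    (hq : q ∈ U) (hU : frontier U ⊆ K) : region K q ⊆ U := by
  by_cases hqK : q ∈ K
  · rw [region, connectedComponentIn_eq_empty (not_not_intro hqK)]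
    exact empty_subset U
  · exact subset_of_disjoint_frontier (isPreconnected_region K q) ⟨q, mem_region_self hqK, hq⟩
      ((disjoint_region K q).mono_right hU)

lemma isPreconnected_compl_closedBall {E : Type*} [NormedAddCommGroup E] [NormedSpace ℝ E]
    (hE : 1 < Module.rank ℝ E) (c : E) (R : ℝ) : IsPreconnected (closedBall c R)ᶜ := by
  rcases lt_or_ge R 0 with hR | hR
  · simpa [closedBall_eq_empty.mpr hR] using isPreconnected_univ
  set f : E → E := fun y => c + (1 + R * ‖y‖⁻¹) • y with hf
  have hcont : ContinuousOn f {0}ᶜ := by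
    refine continuousOn_const.add (ContinuousOn.smul (continuousOn_const.add
      (continuousOn_const.mul (continuous_norm.continuousOn.inv₀ ?_))) continuousOn_id)
    exact fun y hy => norm_ne_zero_iff.mpr hy
  have himage : f '' {0}ᶜ = (closedBall c R)ᶜ := by
    ext z
    simp only [mem_compl_iff, mem_closedBall, dist_eq_norm, not_le]
    constructor
    · rintro ⟨y, hy, rfl⟩
      have hy' : 0 < ‖y‖ := norm_pos_iff.mpr hy
      have : ‖f y - c‖ = ‖y‖ + R := by
        rw [hf, add_sub_cancel_left, norm_smul, Real.norm_of_nonneg (by positivity)]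
        field_simp
      linarith
    · intro hz
      have hz' : 0 < ‖z - c‖ := hR.trans_lt hz
      refine ⟨(1 - R * ‖z - c‖⁻¹) • (z - c), ?_, ?_⟩
      · refine smul_ne_zero (ne_of_gt ?_) (norm_pos_iff.mp hz')
        rw [sub_pos, ← div_eq_mul_inv, div_lt_one hz']
        exact hz
      · have hnorm : ‖(1 - R * ‖z - c‖⁻¹) • (z - c)‖ = ‖z - c‖ - R := by
          rw [norm_smul, Real.norm_of_nonneg]
          · field_simp
          · rw [sub_nonneg, ← div_eq_mul_inv, div_le_one hz']
            exact hz.le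
        have hscalar : (1 + R * (‖z - c‖ - R)⁻¹) * (1 - R * ‖z - c‖⁻¹) = 1 := by
          have : ‖z - c‖ - R ≠ 0 := (sub_pos.mpr hz).ne'
          field_simp
          ring
        simp only [hf, hnorm, smul_smul, hscalar, one_smul, add_sub_cancel]
  exact himage ▸ (isConnected_compl_singleton_of_one_lt_rank hE 0).isPreconnected.image f hcont

end ConnectedSets

section ContinuousLogarithm

lemma exists_continuous_log {A : Type*} [TopologicalSpace A] [SimplyConnectedSpace A]
    [LocallyPathConnectedSpace A] {f : A → ℂ} (hf : Continuous f) (h0 : ∀ z, f z ≠ 0) :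
    ∃ g : A → ℂ, Continuous g ∧ ∀ z, Complex.exp (g z) = f z := by
  obtain ⟨a⟩ : Nonempty A := inferInstance
  obtain ⟨F, ⟨-, hF⟩, -⟩ := Complex.isCoveringMapOn_exp.existsUnique_continuousMap_lifts
    ⟨f, hf⟩ (a₀ := a) (Complex.exp_log (h0 a)) h0
  exact ⟨F, F.continuous, congrFun hF⟩

lemma sub_eq_sub_of_exp_eqOn {X : Type*} [TopologicalSpace X] {S : Set X} (hS : IsPreconnected S)
    {g h : X → ℂ} (hg : ContinuousOn g S) (hh : ContinuousOn h S)
    (hexp : ∀ z ∈ S, Complex.exp (g z) = Complex.exp (h z)) {x y : X} (hx : x ∈ S) (hy : y ∈ S) :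
    g x - h x = g y - h y := by
  have hshift : EqOn g (fun z => h z + (g x - h x)) S := by
    refine Complex.isCoveringMap_exp.eqOn_of_comp_eqOn hS hg (hh.add continuousOn_const)
      (fun z hz => Subtype.ext ?_) hx (by ring)
    simp only [Function.comp_apply]
    rw [Complex.exp_add, Complex.exp_sub, hexp x hx, hexp z hz, div_self (Complex.exp_ne_zero _),
      mul_one]
  linear_combination -hshift hy

lemma exists_eq_zero_of_eqOn_sphere {f : ℂ → ℂ} (hf : Continuous f) {c : ℂ} {R : ℝ} (hR : 0 < R)
    (hfc : ∀ z ∈ sphere c R, f z = z - c) : ∃ z, f z = 0 := by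
  by_contra! h0
  obtain ⟨l, hl, hexp⟩ := exists_continuous_log hf h0
  have hcircle : ∀ θ : ℝ, Complex.exp (l (circleMap c R θ)) =
      Complex.exp (Real.log R + θ * Complex.I) := fun θ => by
    rw [hexp, hfc _ (circleMap_mem_sphere c hR.le θ), circleMap_sub_center, circleMap_zero,
      Complex.exp_add, ← Complex.ofReal_exp, Real.exp_log hR]
  -- Going once around the circle changes `l` by `0`, but the logarithm of `z - c` by `2πi`.
  have hturn := sub_eq_sub_of_exp_eqOn isPreconnected_univ
    (hl.comp (continuous_circleMap c R)).continuousOn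
    (Continuous.continuousOn (by fun_prop)) (fun θ _ => hcircle θ) (mem_univ 0)
    (mem_univ (2 * Real.pi))
  rw [Function.comp_apply, Function.comp_apply, (periodic_circleMap c R).eq] at hturn
  push_cast at hturn
  exact Complex.two_pi_I_ne_zero (by linear_combination hturn)

end ContinuousLogarithm

section LogRatio

variable {K L : Set ℂ} {p q r : ℂ}

/-- The function `z ↦ (z - p) / (z - q)` has a continuous logarithm on `K`. By Borsuk's criterion
this says, for compact `K`, that `K` does not separate `p` from `q`. -/
def HasLogRatio (K : Set ℂ) (p q : ℂ) : Prop :=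
  ∃ g : ℂ → ℂ, ContinuousOn g K ∧ ∀ z ∈ K, Complex.exp (g z) = (z - p) / (z - q)

lemma HasLogRatio.symm (h : HasLogRatio K p q) : HasLogRatio K q p := by
  obtain ⟨g, hg, hexp⟩ := h
  exact ⟨fun z => -g z, hg.neg, fun z hz => by rw [Complex.exp_neg, hexp z hz, inv_div]⟩

lemma HasLogRatio.trans (hq : q ∉ K) (hpq : HasLogRatio K p q) (hqr : HasLogRatio K q r) :
    HasLogRatio K p r := by
  obtain ⟨g, hg, hexp⟩ := hpq
  obtain ⟨g', hg', hexp'⟩ := hqr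
  refine ⟨fun z => g z + g' z, hg.add hg', fun z hz => ?_⟩
  rw [Complex.exp_add, hexp z hz, hexp' z hz,
    div_mul_div_cancel₀ (sub_ne_zero.mpr fun h : z = q => hq (h ▸ hz))]

lemma eventually_hasLogRatio (hK : IsClosed K) (hq : q ∉ K) : ∀ᶠ q' in 𝓝 q, HasLogRatio K q q' := by
  obtain ⟨ε, hε, hball⟩ := Metric.isOpen_iff.mp hK.isOpen_compl q hq
  filter_upwards [ball_mem_nhds q (half_pos hε)] with q' hq'
  have hfar : ∀ z ∈ K, ‖q' - q‖ < ‖z - q'‖ := fun z hz => by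
    have hzq : ε ≤ dist z q := not_lt.mp fun h => hball h hz
    rw [← dist_eq_norm, ← dist_eq_norm]
    linarith [dist_triangle z q' q, mem_ball.mp hq']
  have hne : ∀ z ∈ K, z - q' ≠ 0 := fun z hz =>
    norm_pos_iff.mp ((norm_nonneg _).trans_lt (hfar z hz))
  have hslit : ∀ z ∈ K, (z - q) / (z - q') ∈ Complex.slitPlane := fun z hz => by
    have : (z - q) / (z - q') = 1 + (q' - q) / (z - q') := by
      field_simp [hne z hz]
      ring
    rw [this]
    apply Complex.mem_slitPlane_of_norm_lt_one
    rw [norm_div, div_lt_one (norm_pos_iff.mpr (hne z hz))]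
    exact hfar z hz
  exact ⟨fun z => Complex.log ((z - q) / (z - q')),
    ContinuousOn.clog (ContinuousOn.div (by fun_prop) (by fun_prop) hne) hslit,
    fun z hz => Complex.exp_log (Complex.slitPlane_ne_zero (hslit z hz))⟩

lemma HasLogRatio.of_mem_region (hK : IsClosed K) (h : q ∈ region K p) : HasLogRatio K p q := by
  refine (isPreconnected_region K p).induction₂ (HasLogRatio K)
    (fun x hx => (eventually_hasLogRatio hK (notMem_of_mem_region hx)).filter_mono
      nhdsWithin_le_nhds)
    (fun x y z _ hy _ hxy hyz => hxy.trans (notMem_of_mem_region hy) hyz)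
    (fun x y _ _ hxy => hxy.symm) (mem_region_self (base_notMem_of_mem_region h)) h

lemma HasLogRatio.mem_region_of_isBounded (hK : IsClosed K) (hp : p ∉ K)
    (hbdd : Bornology.IsBounded (region K p)) (h : HasLogRatio K p q) : q ∈ region K p := by
  classical
  by_contra hqU
  obtain ⟨g, hg, hexp⟩ := h
  set U := region K p
  obtain ⟨G, hG⟩ := ContinuousMap.exists_restrict_eq (Y := ℂ) hK
    ⟨K.domRestrict g, continuousOn_iff_continuous_domRestrict.mp hg⟩
  have hGg : ∀ z ∈ K, G z = g z := fun z hz => congrArg (fun f => f ⟨z, hz⟩) hG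
  -- Extend `z - p` from outside `U` to a map of the plane without zeros.
  set f : ℂ → ℂ := fun z => if z ∈ U then (z - q) * Complex.exp (G z) else z - p
  have hf : Continuous f := by
    refine Continuous.if (fun z hz => ?_) (by fun_prop) (by fun_prop)
    have hzK : z ∈ K := frontier_region_subset hK p hz
    have hzq : z - q ≠ 0 := fun h0 => Complex.exp_ne_zero (g z) (by rw [hexp z hzK, h0, div_zero])
    rw [hGg z hzK, hexp z hzK, mul_div_cancel₀ _ hzq]
  obtain ⟨R, hR0, hR⟩ := hbdd.subset_ball_lt 0 p
  have hfc : ∀ z ∈ sphere p R, f z = z - p := fun z hz => if_neg fun hzU =>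
    (mem_ball.mp (hR hzU)).ne hz
  obtain ⟨z, hz⟩ := exists_eq_zero_of_eqOn_sphere hf hR0 hfc
  by_cases hzU : z ∈ U
  · simp only [f, if_pos hzU] at hz
    exact mul_ne_zero (sub_ne_zero.mpr fun h : z = q => hqU (h ▸ hzU)) (Complex.exp_ne_zero _) hz
  · simp only [f, if_neg hzU, sub_eq_zero] at hz
    exact hzU (hz ▸ mem_region_self hp)

lemma HasLogRatio.mem_region (hK : IsCompact K) (hp : p ∉ K) (hq : q ∉ K)
    (h : HasLogRatio K p q) : q ∈ region K p := by
  by_cases hbp : Bornology.IsBounded (region K p)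
  · exact h.mem_region_of_isBounded hK.isClosed hp hbp
  by_cases hbq : Bornology.IsBounded (region K q)
  · exact mem_region_symm (h.symm.mem_region_of_isBounded hK.isClosed hq hbq)
  obtain ⟨R, hR⟩ := hK.isBounded.subset_closedBall 0
  have hfar : ∀ x, ¬ Bornology.IsBounded (region K x) → ∃ y ∈ region K x, y ∉ closedBall 0 R :=
    fun x hx => not_subset.mp fun hsub => hx (isBounded_closedBall.subset hsub)
  obtain ⟨y, hy, hyR⟩ := hfar p hbp
  obtain ⟨y', hy', hyR'⟩ := hfar q hbq
  have houter : y' ∈ region K y := mem_region_of_isPreconnected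
    (isPreconnected_compl_closedBall (Complex.rank_real_complex ▸ Nat.one_lt_ofNat) 0 R)
    (disjoint_compl_left.mono_right hR) hyR hyR'
  exact mem_region_trans hy (mem_region_trans houter (mem_region_symm hy'))

lemma HasLogRatio.union (hK : IsClosed K) (hL : IsClosed L) (hKL : IsPreconnected (K ∩ L))
    (h : HasLogRatio K p q) (h' : HasLogRatio L p q) : HasLogRatio (K ∪ L) p q := by
  classical
  obtain ⟨g, hg, hexp⟩ := h
  obtain ⟨g', hg', hexp'⟩ := h'
  obtain ⟨c, hgc, hc⟩ : ∃ c : ℂ, (∀ z ∈ K ∩ L, g z = g' z + c) ∧ Complex.exp c = 1 := by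
    rcases (K ∩ L).eq_empty_or_nonempty with hempty | ⟨x, hx⟩
    · exact ⟨0, fun z hz => absurd hz (hempty ▸ notMem_empty z), Complex.exp_zero⟩
    have heq : ∀ z ∈ K ∩ L, Complex.exp (g z) = Complex.exp (g' z) := fun z hz =>
      (hexp z hz.1).trans (hexp' z hz.2).symm
    refine ⟨g x - g' x, fun z hz => ?_, ?_⟩
    · linear_combination sub_eq_sub_of_exp_eqOn hKL (hg.mono inter_subset_left)
        (hg'.mono inter_subset_right) heq hz hx
    · rw [Complex.exp_sub, heq x hx, div_self (Complex.exp_ne_zero _)]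
  refine ⟨fun z => if z ∈ K then g z else g' z + c, ?_, fun z hz => ?_⟩
  · have hgc' : ContinuousOn (fun z => g' z + c) L := hg'.add continuousOn_const
    refine ContinuousOn.union_of_isClosed (hg.congr fun z hz => if_pos hz)
      (hgc'.congr fun z hz => ?_) hK hL
    by_cases hzK : z ∈ K
    · simp only [if_pos hzK, hgc z ⟨hzK, hz⟩]
    · exact if_neg hzK
  · by_cases hzK : z ∈ K
    · simp only [if_pos hzK, hexp z hzK]
    · simp only [if_neg hzK, Complex.exp_add, hc, mul_one, hexp' z (hz.resolve_left hzK)]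

end LogRatio

section Janiszewski

/-- The plane in which graphs are drawn. -/
abbrev Plane := ℝ × ℝ

variable {K L : Set Plane} {p q : Plane}

lemma mem_region_iff_hasLogRatio (hK : IsCompact K) (hp : p ∉ K) (hq : q ∉ K) :
    q ∈ region K p ↔ HasLogRatio (Complex.equivRealProdCLM.symm '' K)
      (Complex.equivRealProdCLM.symm p) (Complex.equivRealProdCLM.symm q) := by
  set e := Complex.equivRealProdCLM.symm.toHomeomorph
  have hmem {x : Plane} : e x ∈ e '' K ↔ x ∈ K := e.injective.mem_set_image
  have hregion : e '' region K p = region (e '' K) (e p) := by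
    rw [region, e.image_connectedComponentIn hp, e.image_compl]
  have hKe : IsCompact (e '' K) := hK.image e.continuous
  calc q ∈ region K p ↔ e q ∈ region (e '' K) (e p) := by
        rw [← hregion, e.injective.mem_set_image]
    _ ↔ HasLogRatio (e '' K) (e p) (e q) :=
        ⟨.of_mem_region hKe.isClosed, fun h =>
          h.mem_region hKe (mt hmem.mp hp) (mt hmem.mp hq)⟩

theorem janiszewski (hK : IsCompact K) (hL : IsCompact L) (hKL : IsPreconnected (K ∩ L))
    (hpK : q ∈ region K p) (hpL : q ∈ region L p) : q ∈ region (K ∪ L) p := by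
  set e := Complex.equivRealProdCLM.symm
  have hp : p ∉ K ∪ L := fun h =>
    h.elim (base_notMem_of_mem_region hpK) (base_notMem_of_mem_region hpL)
  have hq : q ∉ K ∪ L := fun h => h.elim (notMem_of_mem_region hpK) (notMem_of_mem_region hpL)
  rw [mem_union, not_or] at hp hq
  rw [mem_region_iff_hasLogRatio hK hp.1 hq.1] at hpK
  rw [mem_region_iff_hasLogRatio hL hp.2 hq.2] at hpL
  rw [mem_region_iff_hasLogRatio (hK.union hL) (by simp [hp]) (by simp [hq]), image_union]
  refine hpK.union (hK.image e.continuous).isClosed (hL.image e.continuous).isClosed ?_ hpL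
  rw [← image_inter e.injective]
  exact hKL.image e e.continuous.continuousOn

end Janiszewski

section SqrtRatio

variable {f g : ℝ → ℂ}

open Classical in
/-- The number `√(f 1) / √(f 0)`, where `√` is continued along the nonvanishing curve `f` from time
`0` to time `1`. It is computed from a continuous logarithm of `f`, with value `1` if there is
none. Comparing the signs of such continuations shows that `K₃,₃` is not planar. -/
noncomputable def sqrtRatio (f : ℝ → ℂ) : ℂ :=
  if h : ∃ g : ℝ → ℂ, Continuous g ∧ ∀ t, Complex.exp (g t) = f t then
    Complex.exp ((h.choose 1 - h.choose 0) / 2)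
  else 1

lemma sqrtRatio_eq (hg : Continuous g) (hexp : ∀ t, Complex.exp (g t) = f t) :
    sqrtRatio f = Complex.exp ((g 1 - g 0) / 2) := by
  have h : ∃ g : ℝ → ℂ, Continuous g ∧ ∀ t, Complex.exp (g t) = f t := ⟨g, hg, hexp⟩
  have hdiff := sub_eq_sub_of_exp_eqOn isPreconnected_univ h.choose_spec.1.continuousOn
    hg.continuousOn (fun t _ => (h.choose_spec.2 t).trans (hexp t).symm) (mem_univ 1) (mem_univ 0)
  rw [sqrtRatio, dif_pos h]
  congr 2
  linear_combination hdiff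

lemma sqrtRatio_ne_zero (f : ℝ → ℂ) : sqrtRatio f ≠ 0 := by
  unfold sqrtRatio
  split_ifs
  exacts [Complex.exp_ne_zero _, one_ne_zero]

lemma sqrtRatio_sq (hf : Continuous f) (h0 : ∀ t, f t ≠ 0) : sqrtRatio f ^ 2 = f 1 / f 0 := by
  obtain ⟨g, hg, hexp⟩ := exists_continuous_log hf h0
  rw [sqrtRatio_eq hg hexp, ← Complex.exp_nat_mul, ← hexp, ← hexp, ← Complex.exp_sub]
  congr 1
  push_cast
  ring

lemma sqrtRatio_neg (hf : Continuous f) (h0 : ∀ t, f t ≠ 0) :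
    sqrtRatio (fun t => -f t) = sqrtRatio f := by
  obtain ⟨g, hg, hexp⟩ := exists_continuous_log hf h0
  rw [sqrtRatio_eq hg hexp, sqrtRatio_eq (g := fun t => g t + Real.pi * Complex.I) (by fun_prop)
    (fun t => by rw [Complex.exp_add, Complex.exp_pi_mul_I, hexp, mul_neg_one])]
  simp only [add_sub_add_right_eq_sub]

lemma sqrtRatio_mul_sqrtRatio {F : ℝ × ℝ → ℂ} (hF : Continuous F) (h0 : ∀ x, F x ≠ 0) :
    sqrtRatio (fun t => F (t, 0)) * sqrtRatio (fun t => F (1, t)) =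
      sqrtRatio (fun t => F (0, t)) * sqrtRatio (fun t => F (t, 1)) := by
  obtain ⟨G, hG, hexp⟩ := exists_continuous_log hF h0
  rw [sqrtRatio_eq (g := fun t => G (t, 0)) (by fun_prop) (fun t => hexp _),
    sqrtRatio_eq (g := fun t => G (1, t)) (by fun_prop) (fun t => hexp _),
    sqrtRatio_eq (g := fun t => G (0, t)) (by fun_prop) (fun t => hexp _),
    sqrtRatio_eq (g := fun t => G (t, 1)) (by fun_prop) (fun t => hexp _),
    ← Complex.exp_add, ← Complex.exp_add]
  ring_nf

lemma sqrtRatio_sub_mul_sqrtRatio_sub {γ δ : ℝ → ℂ} (hγ : Continuous γ) (hδ : Continuous δ)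
    (h : ∀ s t, γ s ≠ δ t) :
    sqrtRatio (fun t => γ t - δ 0) * sqrtRatio (fun t => δ t - γ 1) =
      sqrtRatio (fun t => δ t - γ 0) * sqrtRatio (fun t => γ t - δ 1) := by
  have hneg : ∀ s, sqrtRatio (fun t => δ t - γ s) = sqrtRatio (fun t => γ s - δ t) := fun s => by
    rw [← sqrtRatio_neg (by fun_prop) fun t => sub_ne_zero.mpr (h s t)]
    simp only [neg_sub]
  rw [hneg, hneg]
  exact sqrtRatio_mul_sqrtRatio (F := fun x => γ x.1 - δ x.2) (by fun_prop)
    fun x => sub_ne_zero.mpr (h x.1 x.2)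

end SqrtRatio

section CompleteBipartite

open Finset in
lemma prod_mul_prod_compl_eq {M : Type*} [CommMonoid M] {u u' : Fin 3 → M}
    {v v' : Fin 3 → Fin 3 → M}
    (h : ∀ j l, j ≠ l → u j * v j l = u' l * v' l j) :
    (∏ j, u j ^ 2) * ∏ j, ∏ l ∈ {j}ᶜ, v j l = (∏ j, u' j ^ 2) * ∏ j, ∏ l ∈ {j}ᶜ, v' j l := by
  have hcard : ∀ j : Fin 3, #({j}ᶜ : Finset (Fin 3)) = 2 := fun j => by simp [card_compl]
  calc (∏ j, u j ^ 2) * ∏ j, ∏ l ∈ {j}ᶜ, v j l = ∏ j, ∏ l ∈ {j}ᶜ, u j * v j l := by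
        simp only [prod_mul_distrib, prod_const, hcard]
    _ = ∏ j, ∏ l ∈ {j}ᶜ, u' l * v' l j :=
        prod_congr rfl fun j _ => prod_congr rfl fun l hl => h j l (by simpa [eq_comm] using hl)
    _ = ∏ l, ∏ j ∈ {l}ᶜ, u' l * v' l j := prod_comm' (by simp [eq_comm])
    _ = (∏ j, u' j ^ 2) * ∏ j, ∏ l ∈ {j}ᶜ, v' j l := by
        simp only [prod_mul_distrib, prod_const, hcard]

lemma prod_sub_mul_prod_compl_eq_neg {a a' : ℂ} (ha : a ≠ a') {b u u' : Fin 3 → ℂ}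
    {v v' : Fin 3 → Fin 3 → ℂ} (hu : ∀ j, u j ^ 2 = (b j - a') / (a - a'))
    (hu' : ∀ j, u' j ^ 2 = (b j - a) / (a' - a))
    (h : ∀ j l, j ≠ l → u j * v j l = u' l * v' l j) :
    (∏ j, (b j - a)) * ∏ j, ∏ l ∈ {j}ᶜ, v' j l =
      -((∏ j, (b j - a')) * ∏ j, ∏ l ∈ {j}ᶜ, v j l) := by
  have hprod := prod_mul_prod_compl_eq h
  simp only [hu, hu', Finset.prod_div_distrib, Finset.prod_const, Finset.card_fin] at hprod
  -- The sign is `(-1) ^ 3`: the denominators `(a - a') ^ 3` and `(a' - a) ^ 3` are opposite.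
  rw [← neg_sub a a', Odd.neg_pow (by decide), div_neg, neg_mul, div_mul_eq_mul_div,
    div_mul_eq_mul_div, ← neg_div, div_left_inj' (pow_ne_zero 3 (sub_ne_zero.mpr ha))] at hprod
  rw [hprod, neg_neg]

lemma exists_not_disjoint_range_path_complex {a b : Fin 3 → ℂ} (γ : ∀ i j, Path (a i) (b j)) :
    ∃ i j k l, i ≠ k ∧ j ≠ l ∧ ¬ Disjoint (range (γ i j)) (range (γ k l)) := by
  by_contra! hdisj
  have hcont : ∀ i j, Continuous (γ i j).extend := fun i j => (γ i j).continuous_extend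
  have hne : ∀ i j k l, i ≠ k → j ≠ l → ∀ s t, (γ i j).extend s ≠ (γ k l).extend t := by
    intro i j k l hik hjl s t
    have := hdisj i j k l hik hjl
    rw [← Path.extend_range, ← Path.extend_range] at this
    exact disjoint_left.mp this (mem_range_self s) |>.imp (· ▸ mem_range_self t)
  have hne_start : ∀ i j k, i ≠ k → ∀ t, (γ i j).extend t - a k ≠ 0 := fun i j k hik t => by
    obtain ⟨l, hl⟩ := exists_ne j
    exact sub_ne_zero.mpr ((γ k l).extend_zero ▸ hne i j k l hik hl.symm t 0)
  have hab : ∀ i j, b j - a i ≠ 0 := fun i j => by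
    obtain ⟨k, hk⟩ := exists_ne i
    simpa using hne_start k j i hk 1
  set s : Fin 3 → Fin 3 → Fin 3 → ℂ := fun i k j => sqrtRatio fun t => (γ i j).extend t - a k
  set s' : Fin 3 → Fin 3 → Fin 3 → ℂ := fun k j l => sqrtRatio fun t => (γ k l).extend t - b j
  have hs : ∀ i k j, i ≠ k → s i k j ^ 2 = (b j - a k) / (a i - a k) := fun i k j hik => by
    simp only [s, sqrtRatio_sq (by have := hcont i j; fun_prop) (hne_start i j k hik),
      Path.extend_zero, Path.extend_one]
  have hsquare : ∀ i k j l, i ≠ k → j ≠ l → s i k j * s' k j l = s k i l * s' i l j := by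
    intro i k j l hik hjl
    simpa using sqrtRatio_sub_mul_sqrtRatio_sub (hcont i j) (hcont k l) (hne i j k l hik hjl)
  set x : Fin 3 → ℂ := fun i => (∏ j, (b j - a i)) * ∏ j, ∏ l ∈ {j}ᶜ, s' i j l
  have hx : ∀ i, x i ≠ 0 := fun i => mul_ne_zero (Finset.prod_ne_zero_iff.mpr fun j _ => hab i j)
    (Finset.prod_ne_zero_iff.mpr fun _ _ => Finset.prod_ne_zero_iff.mpr fun _ _ =>
      sqrtRatio_ne_zero _)
  have hanti : ∀ i k, i ≠ k → x i = -x k := fun i k hik =>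
    prod_sub_mul_prod_compl_eq_neg (sub_ne_zero.mp (by simpa using hne_start i 0 k hik 0))
      (fun j => hs i k j hik) (fun j => hs k i j hik.symm) fun j l => hsquare i k j l hik
  have := hanti 0 1 (by decide)
  have := hanti 1 2 (by decide)
  have := hanti 2 0 (by decide)
  exact hx 0 (by grind)

theorem exists_not_disjoint_range_path {a b : Fin 3 → Plane} (γ : ∀ i j, Path (a i) (b j)) :
    ∃ i j k l, i ≠ k ∧ j ≠ l ∧ ¬ Disjoint (range (γ i j)) (range (γ k l)) := by
  set e := Complex.equivRealProdCLM.symm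
  obtain ⟨i, j, k, l, hik, hjl, hmeet⟩ :=
    exists_not_disjoint_range_path_complex fun i j => (γ i j).map e.continuous
  refine ⟨i, j, k, l, hik, hjl, fun hdisj => hmeet ?_⟩
  simpa only [Path.map_coe, range_comp] using (disjoint_image_iff e.injective).mpr hdisj

end CompleteBipartite

section Arcs

variable {X : Type*} [TopologicalSpace X]

/-- `S` is a simple arc with endpoints `x` and `y`. The parametrisation is only constrained on the
unit interval. -/
def IsArc (S : Set X) (x y : X) : Prop :=
  ∃ γ : ℝ → X, ContinuousOn γ (Icc 0 1) ∧ InjOn γ (Icc 0 1) ∧ γ 0 = x ∧ γ 1 = y ∧ γ '' Icc 0 1 = S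

lemma isArc_image_uIcc {γ : ℝ → X} {a b : ℝ} (hab : a ≠ b) (hγ : ContinuousOn γ (uIcc a b))
    (hinj : InjOn γ (uIcc a b)) : IsArc (γ '' uIcc a b) (γ a) (γ b) := by
  have himage : AffineMap.lineMap a b '' Icc (0 : ℝ) 1 = uIcc a b := by
    rw [← segment_eq_image_lineMap, segment_eq_uIcc]
  have hmaps : MapsTo (AffineMap.lineMap a b) (Icc (0 : ℝ) 1) (uIcc a b) :=
    himage ▸ mapsTo_image _ _
  refine ⟨γ ∘ AffineMap.lineMap a b, hγ.comp AffineMap.lineMap_continuous.continuousOn hmaps,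
    hinj.comp (AffineMap.lineMap_injective ℝ hab).injOn hmaps, by simp, by simp, ?_⟩
  rw [image_comp, himage]

lemma isArc_image_Icc {γ : ℝ → X} {a b : ℝ} (hab : a < b) (hγ : ContinuousOn γ (Icc a b))
    (hinj : InjOn γ (Icc a b)) : IsArc (γ '' Icc a b) (γ a) (γ b) := by
  rw [← uIcc_of_le hab.le] at *
  exact isArc_image_uIcc hab.ne hγ hinj

lemma isArc_segment {E : Type*} [NormedAddCommGroup E] [NormedSpace ℝ E] {x y : E} (h : x ≠ y) :
    IsArc (segment ℝ x y) x y :=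
  ⟨AffineMap.lineMap x y, AffineMap.lineMap_continuous.continuousOn,
    (AffineMap.lineMap_injective ℝ h).injOn, by simp, by simp,
    (segment_eq_image_lineMap ℝ x y).symm⟩

lemma exists_continuous_glue {γ₁ γ₂ : ℝ → X} {b : ℝ} (h₁ : Continuous γ₁)
    (h₂ : Continuous γ₂) (hb : γ₁ b = γ₂ b) :
    ∃ γ : ℝ → X, Continuous γ ∧ EqOn γ γ₁ (Iic b) ∧ EqOn γ γ₂ (Ici b) := by
  refine ⟨fun t => if t ≤ b then γ₁ t else γ₂ t,
    h₁.if_le h₂ continuous_id continuous_const (by rintro _ rfl; exact hb), fun t ht => if_pos ht,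
    fun t ht => ?_⟩
  rcases (mem_Ici.mp ht).eq_or_lt with rfl | hlt
  · exact (if_pos le_rfl).trans hb
  · exact if_neg hlt.not_ge

namespace IsArc

variable {S S₁ S₂ K : Set X} {x y z w : X}

lemma symm (h : IsArc S x y) : IsArc S y x := by
  obtain ⟨γ, hγ, hinj, rfl, rfl, rfl⟩ := h
  rw [← uIcc_of_le zero_le_one, uIcc_comm] at *
  exact isArc_image_uIcc one_ne_zero hγ hinj

lemma left_mem (h : IsArc S x y) : x ∈ S := by
  obtain ⟨γ, -, -, rfl, -, rfl⟩ := h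
  exact mem_image_of_mem γ (left_mem_Icc.mpr zero_le_one)

lemma right_mem (h : IsArc S x y) : y ∈ S :=
  h.symm.left_mem

lemma pair_subset (h : IsArc S x y) : {x, y} ⊆ S :=
  Set.pair_subset h.left_mem h.right_mem

lemma ne (h : IsArc S x y) : x ≠ y := by
  obtain ⟨γ, -, hinj, rfl, rfl, -⟩ := h
  exact fun h => zero_ne_one
    (hinj (left_mem_Icc.mpr zero_le_one) (right_mem_Icc.mpr zero_le_one) h)

lemma isCompact (h : IsArc S x y) : IsCompact S := by
  obtain ⟨γ, hγ, -, -, -, rfl⟩ := h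
  exact isCompact_Icc.image_of_continuousOn hγ

lemma isClosed [T2Space X] (h : IsArc S x y) : IsClosed S :=
  h.isCompact.isClosed

lemma image {Y : Type*} [TopologicalSpace Y] {f : X → Y} (h : IsArc S x y) (hf : Continuous f)
    (hinj : Function.Injective f) : IsArc (f '' S) (f x) (f y) := by
  obtain ⟨γ, hγ, hγinj, rfl, rfl, rfl⟩ := h
  exact ⟨f ∘ γ, hf.comp_continuousOn hγ, hinj.injOn.comp hγinj (mapsTo_univ _ _), rfl, rfl,
    image_comp f γ _⟩

lemma isPathConnected (h : IsArc S x y) : IsPathConnected S := by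
  obtain ⟨γ, hγ, -, -, -, rfl⟩ := h
  exact ((convex_Icc (0 : ℝ) 1).isPathConnected (nonempty_Icc.mpr zero_le_one)).image' hγ

lemma isPathConnected_sdiff_left (h : IsArc S x y) : IsPathConnected (S \ {x}) := by
  obtain ⟨γ, hγ, hinj, rfl, rfl, rfl⟩ := h
  rw [← image_singleton, ← hinj.image_sdiff_subset (by simp), Icc_sdiff_left]
  exact ((convex_Ioc (0 : ℝ) 1).isPathConnected (nonempty_Ioc.mpr zero_lt_one)).image'
    (hγ.mono Ioc_subset_Icc_self)

lemma isPathConnected_sdiff_right (h : IsArc S x y) : IsPathConnected (S \ {y}) :=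
  h.symm.isPathConnected_sdiff_left

lemma isPathConnected_sdiff_pair (h : IsArc S x y) : IsPathConnected (S \ {x, y}) := by
  obtain ⟨γ, hγ, hinj, rfl, rfl, rfl⟩ := h
  rw [← image_pair, ← hinj.image_sdiff_subset (by simp [pair_subset_iff]),
    Icc_sdiff_both]
  exact ((convex_Ioo (0 : ℝ) 1).isPathConnected (nonempty_Ioo.mpr zero_lt_one)).image'
    (hγ.mono Ioo_subset_Icc_self)

lemma exists_continuous_param (h : IsArc S x y) {a b : ℝ} (hab : a < b) :
    ∃ γ : ℝ → X, Continuous γ ∧ InjOn γ (Icc a b) ∧ γ a = x ∧ γ b = y ∧ γ '' Icc a b = S := by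
  obtain ⟨γ, hγ, hinj, rfl, rfl, rfl⟩ := h
  have hext : EqOn (IccExtend zero_le_one ((Icc (0 : ℝ) 1).domRestrict γ)) γ (Icc 0 1) :=
    fun t ht => IccExtend_of_mem _ _ ht
  have hcont := (continuousOn_iff_continuous_domRestrict.mp hγ).Icc_extend' (h := zero_le_one)
  have hba : b - a ≠ 0 := (sub_pos.mpr hab).ne'
  have himage : (fun t => (t - a) / (b - a)) '' Icc a b = Icc 0 1 := by
    simp_rw [div_eq_mul_inv]
    rw [← image_image (· * (b - a)⁻¹) (· - a), image_sub_const_Icc, sub_self,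
      image_mul_right_Icc (sub_pos.mpr hab).le (inv_pos.mpr (sub_pos.mpr hab)).le, zero_mul,
      mul_inv_cancel₀ hba]
  refine ⟨_, hcont.comp (by fun_prop : Continuous fun t => (t - a) / (b - a)),
    (hinj.congr hext.symm).comp (fun s _ t _ hst => ?_) (himage ▸ mapsTo_image _ _), ?_, ?_, ?_⟩
  · simpa [hba] using hst
  · simp
  · simp [hba]
  · rw [image_comp, himage, hext.image_eq]

lemma union (h₁ : IsArc S₁ x z) (h₂ : IsArc S₂ z y) (hz : S₁ ∩ S₂ ⊆ {z}) :
    IsArc (S₁ ∪ S₂) x y := by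
  obtain ⟨γ₁, hγ₁, hinj₁, rfl, hz₁, rfl⟩ := h₁.exists_continuous_param zero_lt_one
  obtain ⟨γ₂, hγ₂, hinj₂, hz₂, rfl, rfl⟩ := h₂.exists_continuous_param one_lt_two
  obtain ⟨γ, hγ, heq₁, heq₂⟩ := exists_continuous_glue hγ₁ hγ₂ (hz₁.trans hz₂.symm)
  replace heq₁ := heq₁.mono (Icc_subset_Iic_self (a := 0))
  replace heq₂ := heq₂.mono (Icc_subset_Ici_self : Icc (1 : ℝ) 2 ⊆ Ici 1)
  have hIoc : EqOn γ γ₂ (Ioc 1 2) := heq₂.mono Ioc_subset_Icc_self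
  have hinj : InjOn γ (Icc 0 2) := by
    rw [← Icc_union_Ioc_eq_Icc zero_le_one one_le_two,
      injOn_union (Iic_disjoint_Ioc le_rfl |>.mono_left Icc_subset_Iic_self)]
    refine ⟨hinj₁.congr heq₁.symm, (hinj₂.mono Ioc_subset_Icc_self).congr hIoc.symm, ?_⟩
    intro s hs t ht hst
    rw [heq₁ hs, hIoc ht] at hst
    have hzt : γ₂ t = z := hz ⟨hst ▸ mem_image_of_mem _ hs,
      mem_image_of_mem _ (Ioc_subset_Icc_self ht)⟩
    exact ht.1.ne (hinj₂ (by simp) (Ioc_subset_Icc_self ht) (hz₂.trans hzt.symm))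
  have harc := isArc_image_Icc zero_lt_two hγ.continuousOn hinj
  rwa [← Icc_union_Icc_eq_Icc zero_le_one one_le_two, image_union, heq₁.image_eq, heq₂.image_eq,
    heq₁ (by simp), heq₂ (by simp)] at harc

lemma exists_closed_param_union (h₁ : IsArc S₁ x y) (h₂ : IsArc S₂ x y)
    (hxy : S₁ ∩ S₂ ⊆ {x, y}) :
    ∃ γ : ℝ → X, Continuous γ ∧ InjOn γ (Ico 0 1) ∧ γ 0 = γ 1 ∧ γ '' Icc 0 1 = S₁ ∪ S₂ := by
  obtain ⟨γ₁, hγ₁, hinj₁, hx₁, hy₁, rfl⟩ := h₁.exists_continuous_param one_half_pos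
  obtain ⟨γ₂, hγ₂, hinj₂, hy₂, hx₂, rfl⟩ := h₂.symm.exists_continuous_param one_half_lt_one
  obtain ⟨γ, hγ, heq₁, heq₂⟩ := exists_continuous_glue hγ₁ hγ₂ (hy₁.trans hy₂.symm)
  replace heq₁ := heq₁.mono (Icc_subset_Iic_self (a := 0))
  replace heq₂ := heq₂.mono (Icc_subset_Ici_self : Icc (1 / 2 : ℝ) 1 ⊆ Ici (1 / 2))
  have hIoo : EqOn γ γ₂ (Ioo (1 / 2) 1) := heq₂.mono Ioo_subset_Icc_self
  have hhalf : (1 / 2 : ℝ) ≤ 1 := one_half_lt_one.le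
  refine ⟨γ, hγ, ?_, ?_, ?_⟩
  · rw [← Icc_union_Ioo_eq_Ico one_half_pos.le one_half_lt_one,
      injOn_union (Iic_disjoint_Ioi le_rfl |>.mono Icc_subset_Iic_self Ioo_subset_Ioi_self)]
    refine ⟨hinj₁.congr heq₁.symm, (hinj₂.mono Ioo_subset_Icc_self).congr hIoo.symm, ?_⟩
    intro s hs t ht hst
    rw [heq₁ hs, hIoo ht] at hst
    rcases hxy ⟨hst ▸ mem_image_of_mem _ hs, mem_image_of_mem _ (Ioo_subset_Icc_self ht)⟩ with h | h
    · exact ht.2.ne (hinj₂ (Ioo_subset_Icc_self ht) (right_mem_Icc.mpr hhalf) (h.trans hx₂.symm))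
    · exact ht.1.ne' (hinj₂ (Ioo_subset_Icc_self ht) (left_mem_Icc.mpr hhalf) (h.trans hy₂.symm))
  · rw [heq₁ (left_mem_Icc.mpr one_half_pos.le), heq₂ (right_mem_Icc.mpr hhalf), hx₁, hx₂]
  · rw [← Icc_union_Icc_eq_Icc one_half_pos.le hhalf, image_union, heq₁.image_eq, heq₂.image_eq]

lemma split_image_Icc {γ : ℝ → X} (hγ : ContinuousOn γ (Icc 0 1)) (hinj : InjOn γ (Icc 0 1)) {t : ℝ}
    (ht : t ∈ Ioo 0 1) :
    IsArc (γ '' Icc 0 t) (γ 0) (γ t) ∧ IsArc (γ '' Icc t 1) (γ t) (γ 1) ∧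
      γ '' Icc 0 t ∪ γ '' Icc t 1 = γ '' Icc 0 1 ∧ γ '' Icc 0 t ∩ γ '' Icc t 1 = {γ t} := by
  have hsub₁ : Icc 0 t ⊆ Icc 0 1 := Icc_subset_Icc_right ht.2.le
  have hsub₂ : Icc t 1 ⊆ Icc 0 1 := Icc_subset_Icc_left ht.1.le
  refine ⟨isArc_image_Icc ht.1 (hγ.mono hsub₁) (hinj.mono hsub₁),
    isArc_image_Icc ht.2 (hγ.mono hsub₂) (hinj.mono hsub₂), ?_, ?_⟩
  · rw [← image_union, Icc_union_Icc_eq_Icc ht.1.le ht.2.le]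
  · rw [← hinj.image_inter hsub₁ hsub₂, Icc_inter_Icc_eq_singleton ht.1.le ht.2.le,
      image_singleton]

lemma exists_split (h : IsArc S x y) (hz : z ∈ S) (hzx : z ≠ x) (hzy : z ≠ y) :
    ∃ S₁ S₂, IsArc S₁ x z ∧ IsArc S₂ z y ∧ S₁ ∪ S₂ = S ∧ S₁ ∩ S₂ = {z} := by
  obtain ⟨γ, hγ, hinj, rfl, rfl, rfl⟩ := h
  obtain ⟨t, ht, rfl⟩ := hz
  exact ⟨_, _, split_image_Icc hγ hinj
    ⟨ht.1.lt_of_ne' (ne_of_apply_ne γ hzx), ht.2.lt_of_ne (ne_of_apply_ne γ hzy)⟩⟩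

lemma exists_first_hit (h : IsArc S x y) (hK : IsClosed K) (hne : (S ∩ K).Nonempty)
    (hx : x ∉ K) : ∃ z ∈ K, ∃ S₁ ⊆ S, IsArc S₁ x z ∧ S₁ ∩ K ⊆ {z} := by
  obtain ⟨γ, hγ, hinj, rfl, -, rfl⟩ := h.exists_continuous_param zero_lt_one
  obtain ⟨_, ⟨s, hs, rfl⟩, hsK⟩ := hne
  obtain ⟨t, ⟨ht, htK⟩, hmin⟩ :=
    (isCompact_Icc.inter_right (hK.preimage hγ)).exists_isLeast ⟨s, hs, hsK⟩
  have ht0 : 0 < t := ht.1.lt_of_ne (by rintro rfl; exact hx htK)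
  have hsub : Icc 0 t ⊆ Icc 0 1 := Icc_subset_Icc_right ht.2
  refine ⟨γ t, htK, γ '' Icc 0 t, image_mono hsub,
    isArc_image_Icc ht0 hγ.continuousOn (hinj.mono hsub), ?_⟩
  rintro _ ⟨⟨r, hr, rfl⟩, hrK⟩
  exact congrArg γ (hr.2.antisymm (hmin ⟨hsub hr, hrK⟩))

lemma exists_subarc_left (h : IsArc S x y) (hz : z ∈ S) (hzx : z ≠ x) :
    ∃ S₁ ⊆ S, IsArc S₁ x z := by
  by_cases hzy : z = y
  · exact ⟨S, Subset.rfl, hzy ▸ h⟩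
  · obtain ⟨S₁, S₂, h₁, -, rfl, -⟩ := h.exists_split hz hzx hzy
    exact ⟨S₁, subset_union_left, h₁⟩

lemma exists_subset_union [T2Space X] (h₁ : IsArc S₁ x z) (h₂ : IsArc S₂ z y) (hxy : x ≠ y) :
    ∃ S ⊆ S₁ ∪ S₂, IsArc S x y := by
  by_cases hx : x ∈ S₂
  · obtain ⟨S, hS, harc⟩ := h₂.symm.exists_subarc_left hx hxy
    exact ⟨S, hS.trans subset_union_right, harc.symm⟩
  obtain ⟨m, hm, A, hA, harc, hmeet⟩ :=
    h₁.exists_first_hit h₂.isClosed ⟨z, h₁.right_mem, h₂.left_mem⟩ hx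
  by_cases hmy : m = y
  · exact ⟨A, hA.trans subset_union_left, hmy ▸ harc⟩
  obtain ⟨B, hB, harc'⟩ := h₂.symm.exists_subarc_left hm hmy
  exact ⟨A ∪ B, union_subset_union hA hB,
    harc.union harc'.symm ((inter_subset_inter_right A hB).trans hmeet)⟩

lemma exists_split_right {S : Set X} (h : IsArc S x y) {U : Set X} (hU : U ∈ 𝓝 y) :
    ∃ z S₁ S₂, IsArc S₁ x z ∧ IsArc S₂ z y ∧ S₁ ∪ S₂ = S ∧ S₁ ∩ S₂ = {z} ∧ S₂ ⊆ U := by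
  obtain ⟨γ, hγ, hinj, rfl, rfl, rfl⟩ := h
  have hnhds : ∀ᶠ t in 𝓝[<] (1 : ℝ), Icc t 1 ⊆ γ ⁻¹' U := by
    have hU' : γ ⁻¹' U ∈ 𝓝[≤] (1 : ℝ) :=
      ((hγ 1 (by simp)).mono_of_mem_nhdsWithin (Icc_mem_nhdsLE zero_lt_one)) hU
    obtain ⟨s, hs, hsU⟩ := (mem_nhdsLE_iff_exists_Ioc_subset).mp hU'
    filter_upwards [Ioo_mem_nhdsLT hs] with t ht r hr
    exact hsU ⟨ht.1.trans_le hr.1, hr.2⟩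
  obtain ⟨t, htU, ht⟩ := (hnhds.and (Ioo_mem_nhdsLT (zero_lt_one (α := ℝ)))).exists
  obtain ⟨h₁, h₂, hunion, hinter⟩ := split_image_Icc hγ hinj ht
  exact ⟨γ t, _, _, h₁, h₂, hunion, hinter, image_subset_iff.mpr htU⟩

lemma exists_cut_right {S : Set X} (h : IsArc S x y) {U : Set X} (hU : U ∈ 𝓝 y) :
    ∃ S₁ ⊆ S, y ∉ S₁ ∧ S \ S₁ ⊆ U ∧ ∃ x', IsArc S₁ x x' := by
  obtain ⟨z, S₁, S₂, h₁, h₂, rfl, hmeet, hS₂⟩ := h.exists_split_right hU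
  exact ⟨S₁, subset_union_left, fun hy => h₂.ne (hmeet.subset ⟨hy, h₂.right_mem⟩).symm,
    fun w hw => hS₂ (hw.1.resolve_left hw.2), z, h₁⟩

lemma exists_cut (h : IsArc S x y) (hz : z ∈ S) (hzx : z ≠ x) (hzy : z ≠ y) {U : Set X}
    (hU : U ∈ 𝓝 z) :
    ∃ S₁ S₂, S₁ ∪ S₂ ⊆ S ∧ Disjoint S₁ S₂ ∧ z ∉ S₁ ∪ S₂ ∧ S \ (S₁ ∪ S₂) ⊆ U ∧
      (∃ x', IsArc S₁ x x') ∧ ∃ y', IsArc S₂ y' y := by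
  obtain ⟨T₁, T₂, h₁, h₂, rfl, hmeet⟩ := h.exists_split hz hzx hzy
  obtain ⟨S₁, hS₁, hz₁, hU₁, x', hx'⟩ := h₁.exists_cut_right hU
  obtain ⟨S₂, hS₂, hz₂, hU₂, y', hy'⟩ := h₂.symm.exists_cut_right hU
  refine ⟨S₁, S₂, union_subset_union hS₁ hS₂, disjoint_left.mpr fun w hw hw' => ?_,
    fun h => h.elim hz₁ hz₂, ?_, ⟨x', hx'⟩, y', hy'.symm⟩
  · obtain rfl : w = z := hmeet.subset ⟨hS₁ hw, hS₂ hw'⟩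
    exact hz₁ hw
  · rintro w ⟨hw | hw, hwS⟩
    · exact hU₁ ⟨hw, fun h => hwS (.inl h)⟩
    · exact hU₂ ⟨hw, fun h => hwS (.inr h)⟩

lemma subset_closure_sdiff_pair (h : IsArc S x y) : S ⊆ closure (S \ {x, y}) := by
  obtain ⟨γ, hγ, hinj, rfl, rfl, rfl⟩ := h
  rw [← image_pair, ← hinj.image_sdiff_subset (by simp [pair_subset_iff]), Icc_sdiff_both]
  have hclosure : closure (Ioo (0 : ℝ) 1) = Icc 0 1 := closure_Ioo zero_ne_one
  exact hclosure ▸ ContinuousOn.image_closure (hclosure.symm ▸ hγ)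

end IsArc

lemma exists_isArc_of_isOpen {E : Type*} [NormedAddCommGroup E] [NormedSpace ℝ E] {U : Set E}
    (hU : IsOpen U) (hconn : IsPreconnected U) {x y : E} (hx : x ∈ U) (hy : y ∈ U) (hxy : x ≠ y) :
    ∃ A ⊆ U, IsArc A x y := by
  refine (hconn.induction₂ (fun x y => x = y ∨ ∃ A ⊆ U, IsArc A x y) ?_ ?_ ?_ hx hy).resolve_left
    hxy
  · intro z hz
    obtain ⟨r, hr, hball⟩ := Metric.isOpen_iff.mp hU z hz
    filter_upwards [nhdsWithin_le_nhds (ball_mem_nhds z hr)] with w hw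
    exact or_iff_not_imp_left.mpr fun hne => ⟨segment ℝ z w,
      ((convex_ball z r).segment_subset (mem_ball_self hr) hw).trans hball, isArc_segment hne⟩
  · rintro u v w - - - (rfl | ⟨A, hA, harc⟩) (rfl | ⟨B, hB, harc'⟩)
    · exact .inl rfl
    · exact .inr ⟨B, hB, harc'⟩
    · exact .inr ⟨A, hA, harc⟩
    · refine or_iff_not_imp_left.mpr fun hne => ?_
      obtain ⟨C, hC, harc''⟩ := harc.exists_subset_union harc' hne
      exact ⟨C, hC.trans (union_subset hA hB), harc''⟩
  · rintro u v - - (rfl | ⟨A, hA, harc⟩)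
    · exact .inl rfl
    · exact .inr ⟨A, hA, harc.symm⟩

end Arcs

section ArcsDoNotSeparate

lemma continuousOn_image_of_isCompact {X Y Z : Type*} [TopologicalSpace X] [TopologicalSpace Y]
    [TopologicalSpace Z] [T2Space Y] {s : Set X} {γ : X → Y} {g : Y → Z} (hs : IsCompact s)
    (hγ : ContinuousOn γ s) (hg : ContinuousOn (g ∘ γ) s) : ContinuousOn g (γ '' s) := by
  have := isCompact_iff_compactSpace.mp hs
  have hcont := hγ.mapsToRestrict (mapsTo_image γ s)
  rw [continuousOn_iff_continuous_domRestrict] at hg ⊢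
  exact (hcont.isClosedMap.isQuotientMap hcont
    ((mapsTo_image γ s).restrict_surjective_iff.mpr (surjOn_image γ s))).continuous_iff.mpr hg

lemma IsArc.hasLogRatio {S : Set ℂ} {x y p q : ℂ} (h : IsArc S x y) (hp : p ∉ S) (hq : q ∉ S) :
    HasLogRatio S p q := by
  obtain ⟨γ, hγ, hinj, rfl, rfl, rfl⟩ := h
  have hne {z : ℂ} (hz : z ∉ γ '' Icc 0 1) (t : ℝ) : γ (projIcc 0 1 zero_le_one t) - z ≠ 0 :=
    sub_ne_zero.mpr fun h => hz (h ▸ mem_image_of_mem γ (projIcc 0 1 zero_le_one t).2)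
  have hproj : Continuous fun t : ℝ => γ (projIcc 0 1 zero_le_one t) :=
    (continuousOn_iff_continuous_domRestrict.mp hγ).Icc_extend'
  obtain ⟨l, hl, hexp⟩ := exists_continuous_log
    ((hproj.sub continuous_const).div (hproj.sub continuous_const) (hne hq))
    fun t => div_ne_zero (hne hp t) (hne hq t)
  have hinv : EqOn (l ∘ Function.invFunOn γ (Icc 0 1) ∘ γ) l (Icc 0 1) := fun t ht =>
    congrArg l (hinj.leftInvOn_invFunOn ht)
  refine ⟨l ∘ Function.invFunOn γ (Icc 0 1), continuousOn_image_of_isCompact isCompact_Icc hγ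
    (hl.continuousOn.congr hinv), ?_⟩
  rintro _ ⟨t, ht, rfl⟩
  rw [show (l ∘ Function.invFunOn γ (Icc 0 1)) (γ t) = l t from hinv ht, hexp]
  simp only [Pi.div_apply, Pi.sub_apply, projIcc_of_mem zero_le_one ht]

lemma IsArc.mem_region {S : Set Plane} {x y p q : Plane} (h : IsArc S x y) (hp : p ∉ S)
    (hq : q ∉ S) : q ∈ region S p := by
  let e := Complex.equivRealProdCLM.symm.toHomeomorph
  refine (mem_region_iff_hasLogRatio h.isCompact hp hq).mpr <|
    (h.image e.continuous e.injective).hasLogRatio ?_ ?_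
  · exact mt e.injective.mem_set_image.mp hp
  · exact mt e.injective.mem_set_image.mp hq

end ArcsDoNotSeparate

section Boundary

variable {C : Set Plane} {p y : Plane}

lemma mem_closure_region_of_mem_region (hC : IsClosed C) (hp : p ∉ C) (hy : y ∈ C)
    (h : ∀ U ∈ 𝓝 y, ∃ K, C \ K ⊆ U ∧ y ∈ region K p) : y ∈ closure (region C p) := by
  by_contra hcl
  obtain ⟨K, hCK, hyK⟩ := h _ (isClosed_closure.isOpen_compl.mem_nhds hcl)
  have hfrontier : frontier (region C p) ⊆ K := fun z hz => by
    by_contra hzK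
    exact hCK ⟨frontier_region_subset hC p hz, hzK⟩ hz.1
  have hsub : region K p ⊆ region C p :=
    region_subset_of_frontier_subset (mem_region_self hp) hfrontier
  exact notMem_of_mem_region (hsub hyK) hy

lemma IsArc.mem_closure_region {A : Set Plane} {x z : Plane} (hA : IsArc A x y) (hz : z ∈ A)
    (hzx : z ≠ x) (hzy : z ≠ y) (hp : p ∉ A) : z ∈ closure (region A p) := by
  refine mem_closure_region_of_mem_region hA.isClosed hp hz fun U hU => ?_
  obtain ⟨S₁, S₂, hS, hdisj, hzS, hSU, ⟨x', h₁⟩, y', h₂⟩ := hA.exists_cut hz hzx hzy hU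
  rw [mem_union, not_or] at hzS
  rw [union_subset_iff] at hS
  refine ⟨S₁ ∪ S₂, hSU, janiszewski h₁.isCompact h₂.isCompact ?_
    (h₁.mem_region (fun h => hp (hS.1 h)) hzS.1) (h₂.mem_region (fun h => hp (hS.2 h)) hzS.2)⟩
  rw [hdisj.inter_eq]
  exact isPreconnected_empty

lemma IsArc.mem_closure_region_union {A B : Set Plane} {x z : Plane} (hA : IsArc A x y)
    (hB : IsArc B x y) (hAB : A ∩ B ⊆ {x, y}) (hz : z ∈ A) (hzx : z ≠ x) (hzy : z ≠ y)
    (hp : p ∉ A ∪ B) : z ∈ closure (region (A ∪ B) p) := by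
  refine mem_closure_region_of_mem_region (hA.isClosed.union hB.isClosed) hp (.inl hz)
    fun U hU => ?_
  obtain ⟨S₁, S₂, hS, hdisj, hzS, hSU, ⟨x', h₁⟩, y', h₂⟩ := hA.exists_cut hz hzx hzy hU
  rw [union_subset_iff] at hS
  have hzB : z ∉ B := fun h => by simpa [hzx, hzy] using hAB ⟨hz, h⟩
  have hmeet₁ : S₁ ∩ B ⊆ {x} := fun w hw => (hAB ⟨hS.1 hw.1, hw.2⟩).resolve_right <| by
    rintro rfl
    exact disjoint_left.mp hdisj hw.1 h₂.right_mem
  have hmeet₂ : (S₁ ∪ B) ∩ S₂ ⊆ {y} := by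
    rintro w ⟨hw₁ | hwB, hw₂⟩
    · exact (disjoint_left.mp hdisj hw₁ hw₂).elim
    · refine (hAB ⟨hS.2 hw₂, hwB⟩).resolve_left ?_
      rintro rfl
      exact disjoint_left.mp hdisj h₁.left_mem hw₂
  have harc : IsArc (S₁ ∪ B ∪ S₂) x' y' := (h₁.symm.union hB hmeet₁).union h₂.symm hmeet₂
  have hsub : S₁ ∪ B ∪ S₂ ⊆ A ∪ B := by
    rw [union_right_comm]
    exact union_subset_union_left B (union_subset hS.1 hS.2)
  refine ⟨_, fun w hw => ?_, harc.mem_region (fun h => hp (hsub h)) ?_⟩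
  · simp only [mem_sdiff, mem_union, not_or] at hw
    exact hSU ⟨hw.1.resolve_right hw.2.1.2, by simp [hw.2]⟩
  · simp only [mem_union, not_or] at hzS ⊢
    exact ⟨⟨hzS.1, hzB⟩, hzS.2⟩

end Boundary

section ThreeByThree

lemma exists_not_disjoint_of_joinedIn {a b : Fin 3 → Plane} {U : Fin 3 → Fin 3 → Set Plane}
    (h : ∀ i j, JoinedIn (U i j) (a i) (b j)) :
    ∃ i j k l, i ≠ k ∧ j ≠ l ∧ ¬ Disjoint (U i j) (U k l) := by
  obtain ⟨i, j, k, l, hik, hjl, hmeet⟩ := exists_not_disjoint_range_path fun i j =>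
    (h i j).somePath
  have hrange (i j) : range (h i j).somePath ⊆ U i j := range_subset_iff.mpr (h i j).somePath_mem
  exact ⟨i, j, k, l, hik, hjl, fun hd => hmeet (hd.mono (hrange i j) (hrange k l))⟩

lemma joinedIn_region {E : Type*} [NormedAddCommGroup E] [NormedSpace ℝ E] {K : Set E} {p q : E}
    (hK : IsClosed K) (h : q ∈ region K p) : JoinedIn (region K p) p q :=
  have hp : p ∈ region K p := mem_region_self (base_notMem_of_mem_region h)
  ((isOpen_region hK p).isConnected_iff_isPathConnected.mp
    ⟨⟨p, hp⟩, isPreconnected_region K p⟩).joinedIn p hp q h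

section NormedSpace

variable {E : Type*} [NormedAddCommGroup E] [NormedSpace ℝ E] {S U : Set E} {p z : E} {r : ℝ}

lemma exists_isArc_subset_ball (hS : IsClosed S) (hp : p ∉ S) (hz : z ∈ S) (hpz : p ∈ ball z r) :
    ∃ m ∈ S, ∃ B ⊆ ball z r, IsArc B p m ∧ B \ {m} ⊆ region S p := by
  obtain ⟨m, hm, B, hB, harc, hmeet⟩ := (isArc_segment (ne_of_mem_of_not_mem hz hp).symm)
    |>.exists_first_hit hS ⟨z, right_mem_segment ℝ p z, hz⟩ hp
  refine ⟨m, hm, B, hB.trans ?_, harc, ?_⟩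
  · exact (convex_ball z r).segment_subset hpz (mem_ball_self (pos_of_mem_ball hpz))
  · refine subset_region harc.isPathConnected_sdiff_right.isConnected.isPreconnected ?_
      ⟨harc.left_mem, harc.ne⟩ (mem_region_self hp)
    exact disjoint_left.mpr fun w hw hwS => hw.2 (hmeet ⟨hw.1, hwS⟩)

lemma exists_mem_closure_region_of_mem_ball (hS : IsClosed S) (hp : p ∉ S) (hz : z ∈ S)
    (hpz : p ∈ ball z r) : ∃ m ∈ S ∩ ball z r, m ∈ closure (region S p) := by
  obtain ⟨m, hm, B, hB, harc, hBm⟩ := exists_isArc_subset_ball hS hp hz hpz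
  exact ⟨m, ⟨hm, hB harc.right_mem⟩, closure_mono ((sdiff_subset_sdiff_right (by simp)).trans hBm)
    (harc.subset_closure_sdiff_pair harc.right_mem)⟩

lemma exists_isArc_sdiff_subset_region (hS : IsClosed S) (hz : z ∈ S)
    (hcl : z ∈ closure (region S p)) (hU : U ∈ 𝓝 z) :
    ∃ m ∈ S ∩ U, ∃ q ∈ region S p, ∃ B ⊆ U, IsArc B q m ∧ B \ {m} ⊆ region S p := by
  obtain ⟨r, hr, hrU⟩ := Metric.mem_nhds_iff.mp hU
  obtain ⟨q, hq, hqz⟩ := Metric.mem_closure_iff.mp hcl r hr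
  obtain ⟨m, hm, B, hB, harc, hBm⟩ :=
    exists_isArc_subset_ball hS (notMem_of_mem_region hq) hz (mem_ball'.mpr hqz)
  exact ⟨m, ⟨hm, hrU (hB harc.right_mem)⟩, q, hq, B, hB.trans hrU, harc, region_eq hq ▸ hBm⟩

end NormedSpace

lemma exists_mem_region_of_forall_mem_closure {S : Set Plane} (hS : IsClosed S) {p : Fin 3 → Plane}
    {A : Fin 3 → Set Plane} (hA : ∀ j, IsPathConnected (A j))
    (hAS : ∀ j, A j ⊆ S) (hopen : ∀ j, IsClosed (S \ A j)) (hdisj : Pairwise (Disjoint on A))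
    (hcl : ∀ i j, (A j ∩ closure (region S (p i))).Nonempty) :
    ∃ i k, i ≠ k ∧ p k ∈ region S (p i) := by
  choose b hb using fun j => (hA j).nonempty
  have hjoin (i j) : JoinedIn (region S (p i) ∪ A j) (p i) (b j) := by
    obtain ⟨z, hzA, hzcl⟩ := hcl i j
    obtain ⟨m, hm, q, hq, B, -, hB, hBm⟩ := exists_isArc_sdiff_subset_region hS (hAS j hzA) hzcl
      ((hopen j).isOpen_compl.mem_nhds fun h => h.2 hzA)
    have hmA : m ∈ A j := not_not.mp fun h => hm.2 ⟨hm.1, h⟩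
    have hBsub : B ⊆ region S (p i) ∪ A j :=
      (sdiff_subset_iff.mp hBm).trans (union_comm _ _ ▸ union_subset_union_right _ (by simpa))
    exact ((joinedIn_region hS hq).mono subset_union_left).trans
      (((hB.isPathConnected.joinedIn q hB.left_mem m hB.right_mem).mono hBsub).trans
        (((hA j).joinedIn m hmA (b j) (hb j)).mono subset_union_right))
  obtain ⟨i, j, k, l, hik, hjl, hmeet⟩ := exists_not_disjoint_of_joinedIn hjoin
  have hAr (i j) : Disjoint (region S (p i)) (A j) := (disjoint_region S (p i)).mono_right (hAS j)
  simp only [disjoint_union_left, disjoint_union_right, hAr, (hAr _ _).symm, hdisj hjl,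
    and_true] at hmeet
  obtain ⟨w, hwi, hwk⟩ := not_disjoint_iff.mp hmeet
  exact ⟨i, k, hik, mem_region_trans hwi (mem_region_symm hwk)⟩

lemma IsArc.exists_pairwise_disjoint {X : Type*} [TopologicalSpace X] [T2Space X] {S : Set X}
    {x y : X} (h : IsArc S x y) :
    ∃ A : ℕ → Set X, Pairwise (Disjoint on A) ∧
      ∀ n, IsPathConnected (A n) ∧ A n ⊆ S \ {x, y} ∧ IsClosed (S \ A n) := by
  obtain ⟨γ, hγ, hinj, rfl, rfl, rfl⟩ := h
  let I (n : ℕ) : Set ℝ := Ioo (1 / ((n + 1 : ℕ) + 1)) (1 / (n + 1))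
  have hI (n : ℕ) : I n ⊆ Ioo 0 1 :=
    Ioo_subset_Ioo (by positivity) (div_le_one_of_le₀ (by simp) (by positivity))
  have hIcc (n : ℕ) : I n ⊆ Icc 0 1 := (hI n).trans Ioo_subset_Icc_self
  have hanti : Antitone fun n : ℕ => 1 / ((n : ℝ) + 1) := fun m n hmn =>
    one_div_le_one_div_of_le (by positivity) (by simpa)
  have hdisj : Pairwise (Disjoint on I) := hanti.pairwise_disjoint_on_Ioo_succ
  refine ⟨fun n => γ '' I n, fun m n hmn => (hdisj hmn).image hinj (hIcc m) (hIcc n),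
    fun n => ⟨?_, ?_, ?_⟩⟩
  · exact ((convex_Ioo _ _).isPathConnected (nonempty_Ioo.mpr
      (one_div_lt_one_div_of_lt (by positivity) (by simp)))).image' (hγ.mono (hIcc n))
  · rw [← image_pair, ← hinj.image_sdiff_subset (by simp [pair_subset_iff]), Icc_sdiff_both]
    exact image_mono (hI n)
  · rw [← hinj.image_sdiff_subset (hIcc n)]
    exact ((isCompact_Icc.diff isOpen_Ioo).image_of_continuousOn (hγ.mono sdiff_subset)).isClosed

lemma IsArc.mem_region_union_of_notMem {A B : Set Plane} {x y p q r : Plane} (hA : IsArc A x y)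
    (hB : IsArc B x y) (hAB : A ∩ B ⊆ {x, y}) (hp : p ∉ A ∪ B) (hq : q ∉ A ∪ B)
    (hr : r ∉ A ∪ B) (hpq : q ∉ region (A ∪ B) p) (hpr : r ∉ region (A ∪ B) p) :
    r ∈ region (A ∪ B) q := by
  obtain ⟨T, hdisj, hT⟩ := hA.exists_pairwise_disjoint
  have hpts : ∀ i, ![p, q, r] i ∉ A ∪ B := fun i => by
    fin_cases i <;> assumption
  have hTB (j : ℕ) : Disjoint (T j) B := disjoint_left.mpr fun w hw hwB =>
    ((hT j).2.1 hw).2 (hAB ⟨((hT j).2.1 hw).1, hwB⟩)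
  obtain ⟨i, k, hik, hmem⟩ := exists_mem_region_of_forall_mem_closure
    (hA.isClosed.union hB.isClosed) (p := ![p, q, r]) (A := fun j => T j)
    (fun j => (hT j).1) (fun j w hw => .inl ((hT j).2.1 hw).1)
    (fun j => by
      rw [union_sdiff_distrib, (hTB j).symm.sdiff_eq_left]
      exact (hT j).2.2.union hB.isClosed)
    (fun j l hjl => hdisj (Fin.val_injective.ne hjl))
    (fun i j => by
      obtain ⟨z, hz⟩ := (hT j).1.nonempty
      have hzA := (hT j).2.1 hz
      simp only [mem_sdiff, mem_insert_iff, mem_singleton_iff, not_or] at hzA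
      exact ⟨z, hz, hA.mem_closure_region_union hB hAB hzA.1 hzA.2.1 hzA.2.2 (hpts i)⟩)
  have hsymm {a b : Plane} (hab : b ∉ region (A ∪ B) a) : a ∉ region (A ∪ B) b :=
    fun h => hab (mem_region_symm h)
  fin_cases i <;> fin_cases k <;>
    simp_all [mem_region_symm]

end ThreeByThree

section Theta

lemma exists_notMem_region_of_theta {Q : Fin 3 → Set Plane} {m t p : Plane} {x : Fin 3 → Plane}
    (hQ : ∀ i, IsArc (Q i) m t) (hmeet : Pairwise fun i j => Q i ∩ Q j ⊆ {m, t})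
    (hx : ∀ i, x i ∈ Q i \ {m, t}) : ∃ i, x i ∉ region (⋃ j ≠ i, Q j) p := by
  by_contra! hreg
  simp only [mem_sdiff, mem_insert_iff, mem_singleton_iff, not_or] at hx
  choose S₁ S₂ h₁ h₂ hS hcut using fun i => (hQ i).exists_split (hx i).1 (hx i).2.1 (hx i).2.2
  have hS₁ (i) : S₁ i ⊆ Q i := hS i ▸ subset_union_left
  have hS₂ (i) : S₂ i ⊆ Q i := hS i ▸ subset_union_right
  have hdisj (i j) (hij : i ≠ j) : Disjoint (S₁ i) (S₂ j) := disjoint_left.mpr fun w hw hw' => by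
    rcases hmeet hij ⟨hS₁ i hw, hS₂ j hw'⟩ with rfl | rfl
    · exact (hx j).2.1 ((hcut j).subset ⟨(h₁ j).left_mem, hw'⟩).symm
    · exact (hx i).2.2 ((hcut i).subset ⟨hw, (h₂ i).right_mem⟩).symm
  have hclosed (i) : IsClosed (⋃ j ≠ i, Q j) :=
    (toFinite _).isClosed_biUnion fun j _ => (hQ j).isClosed
  have hdisjQ (i j) (hij : j ≠ i) : Disjoint (region (⋃ j ≠ i, Q j) p) (Q j) :=
    (disjoint_region _ p).mono_right (subset_biUnion_of_mem (u := Q) hij)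
  -- The points `m`, `t`, `p` and the points `x i` form a `K₃,₃`.
  obtain ⟨i, j, k, l, hik, hjl, hne⟩ := exists_not_disjoint_of_joinedIn
    (a := ![m, t, p]) (b := x) (U := ![S₁, S₂, fun i => region (⋃ j ≠ i, Q j) p]) fun i j => by
      fin_cases i
      · exact (h₁ j).isPathConnected.joinedIn _ (h₁ j).left_mem _ (h₁ j).right_mem
      · exact (h₂ j).isPathConnected.joinedIn _ (h₂ j).right_mem _ (h₂ j).left_mem
      · exact joinedIn_region (hclosed j) (hreg j)
  refine hne ?_
  fin_cases i <;> fin_cases k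
  · exact (hik rfl).elim
  · exact hdisj j l hjl
  · exact ((hdisjQ l j hjl).mono_right (hS₁ j)).symm
  · exact (hdisj l j hjl.symm).symm
  · exact (hik rfl).elim
  · exact ((hdisjQ l j hjl).mono_right (hS₂ j)).symm
  · exact (hdisjQ j l hjl.symm).mono_right (hS₁ l)
  · exact (hdisjQ j l hjl.symm).mono_right (hS₂ l)
  · exact (hik rfl).elim

lemma notMem_region_of_theta {Q₁ Q₂ Q₃ : Set Plane} {m t p x₁ x₂ x₃ : Plane}
    (h₁ : IsArc Q₁ m t) (h₂ : IsArc Q₂ m t) (h₃ : IsArc Q₃ m t) (h₁₂ : Q₁ ∩ Q₂ ⊆ {m, t})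
    (h₁₃ : Q₁ ∩ Q₃ ⊆ {m, t}) (h₂₃ : Q₂ ∩ Q₃ ⊆ {m, t}) (hx₁ : x₁ ∈ Q₁ \ {m, t})
    (hx₂ : x₂ ∈ Q₂ \ {m, t}) (hx₃ : x₃ ∈ Q₃ \ {m, t}) (hr₁ : x₁ ∈ region (Q₂ ∪ Q₃) p)
    (hr₂ : x₂ ∈ region (Q₁ ∪ Q₃) p) : x₃ ∉ region (Q₁ ∪ Q₂) p := by
  obtain ⟨i, hi⟩ := exists_notMem_region_of_theta (Q := ![Q₁, Q₂, Q₃]) (p := p)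
    (x := ![x₁, x₂, x₃]) (fun i => by fin_cases i <;> assumption)
    (fun i j hij => by
      fin_cases i <;> fin_cases j <;>
        first | exact (hij rfl).elim | assumption | (rw [inter_comm]; assumption))
    (fun i => by fin_cases i <;> assumption)
  have h0 : ⋃ j ≠ 0, ![Q₁, Q₂, Q₃] j = Q₂ ∪ Q₃ := by ext; simp [Fin.exists_fin_succ]
  have h1 : ⋃ j ≠ 1, ![Q₁, Q₂, Q₃] j = Q₁ ∪ Q₃ := by ext; simp [Fin.exists_fin_succ]
  have h2 : ⋃ j ≠ 2, ![Q₁, Q₂, Q₃] j = Q₁ ∪ Q₂ := by ext; simp [Fin.exists_fin_succ]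
  fin_cases i
  · exact (hi (h0 ▸ hr₁)).elim
  · exact (hi (h1 ▸ hr₂)).elim
  · exact fun hr₃ => hi (h2 ▸ hr₃)

end Theta

section PartialEdge

variable {Y T e F : Set Plane} {u v x y p : Plane}

lemma IsArc.right_mem_closure_of_frontier_subset (hT : IsArc T u y) (hY : IsCompact Y)
    (hYT : Y ∩ T ⊆ {u}) (hF : frontier F ⊆ Y ∪ T) (hFT : Disjoint F T) (hx : x ∈ T) (hxu : x ≠ u)
    (hxF : x ∈ closure F) : y ∈ closure F := by
  by_contra hyF
  obtain ⟨S, hST, hyS, hSF, _, hS⟩ :=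
    hT.exists_cut_right (isClosed_closure.isOpen_compl.mem_nhds hyF)
  have hFS : frontier F ⊆ Y ∪ S := fun z hz => (hF hz).imp_right fun hzT =>
    by_contra fun hzS => hSF ⟨hzT, hzS⟩ hz.1
  have hTY : Disjoint (T \ {u}) Y := disjoint_left.mpr fun z hz hzY => hz.2 (hYT ⟨hzY, hz.1⟩)
  have hyx : y ∈ region Y x := mem_region_of_isPreconnected
    hT.isPathConnected_sdiff_left.isConnected.isPreconnected hTY ⟨hx, hxu⟩
    ⟨hT.right_mem, hT.ne.symm⟩
  obtain ⟨p, hpF, hpY⟩ := mem_closure_iff_nhds.mp hxF _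
    ((isOpen_region hY.isClosed x).mem_nhds (mem_region_self (base_notMem_of_mem_region hyx)))
    |>.imp fun _ h => h.symm
  have hyp : y ∈ region (Y ∪ S) p := by
    refine janiszewski hY hS.isCompact ?_ (mem_region_trans (mem_region_symm hpY) hyx)
      (hS.mem_region (fun h => disjoint_left.mp hFT hpF (hST h)) hyS)
    exact (subsingleton_singleton.anti
      ((inter_subset_inter_right Y hST).trans hYT)).isPreconnected
  have hsub : region (Y ∪ S) p ⊆ F := region_subset_of_frontier_subset hpF hFS
  exact hyF (subset_closure (hsub hyp))

lemma mem_closure_of_frontier_subset_union {T₁ T₂ : Set Plane} (h₁ : IsArc T₁ u y)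
    (h₂ : IsArc T₂ y v) (hmeet : T₁ ∩ T₂ ⊆ {y}) (hY : IsCompact Y)
    (hYT : Y ∩ (T₁ ∪ T₂) ⊆ {u, v}) (hF : frontier F ⊆ Y ∪ (T₁ ∪ T₂)) (hFT : Disjoint F T₁)
    (hx : x ∈ T₁) (hxu : x ≠ u) (hxF : x ∈ closure F) : y ∈ closure F := by
  by_contra hyF
  obtain ⟨S, hST, hyS, hSF, _, hS⟩ :=
    h₂.symm.exists_cut_right (isClosed_closure.isOpen_compl.mem_nhds hyF)
  refine hyF (h₁.right_mem_closure_of_frontier_subset (hY.union hS.isCompact) ?_ ?_ hFT hx hxu hxF)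
  · rintro z ⟨hzY | hzS, hz⟩
    · refine (hYT ⟨hzY, .inl hz⟩).resolve_right ?_
      rintro rfl
      exact h₂.ne.symm (hmeet ⟨hz, h₂.right_mem⟩)
    · exact (hyS (hmeet ⟨hz, hST hzS⟩ ▸ hzS)).elim
  · intro z hz
    rcases hF hz with hzY | hz₁ | hz₂
    · exact .inl (.inl hzY)
    · exact .inr hz₁
    · exact .inl (.inr (by_contra fun hzS => hSF ⟨hz₂, hzS⟩ hz.1))

lemma IsArc.subset_closure_of_frontier_subset (he : IsArc e u v) (hY : IsCompact Y)
    (hYe : Y ∩ e ⊆ {u, v}) (hF : frontier F ⊆ Y ∪ e) (hFe : Disjoint F e) (hx : x ∈ e)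
    (hxu : x ≠ u) (hxv : x ≠ v) (hxF : x ∈ closure F) : e ⊆ closure F := by
  refine he.subset_closure_sdiff_pair.trans (closure_minimal (fun y hy => ?_) isClosed_closure)
  simp only [mem_sdiff, mem_insert_iff, mem_singleton_iff, not_or] at hy
  obtain ⟨T₁, T₂, h₁, h₂, rfl, hmeet⟩ := he.exists_split hy.1 hy.2.1 hy.2.2
  rw [disjoint_union_right] at hFe
  rcases hx with hx | hx
  · exact mem_closure_of_frontier_subset_union h₁ h₂ hmeet.subset hY hYe hF hFe.1 hx hxu hxF
  · rw [inter_comm] at hmeet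
    rw [union_comm T₁, pair_comm u] at hYe
    rw [union_comm T₁] at hF
    exact mem_closure_of_frontier_subset_union h₂.symm h₁.symm hmeet.subset hY hYe hF hFe.2 hx hxv
      hxF

end PartialEdge

open Filter

section Concatenation

variable {X : Type*} [TopologicalSpace X] {x : ℕ → X} {w : X} {α : ℕ → Set X}

lemma isArc_insert_image_Ici {γ : ℝ → X} (hγ : ContinuousOn γ (Ici 0)) (hinj : InjOn γ (Ici 0))
    (hlim : Tendsto γ atTop (𝓝 w)) (hw : w ∉ γ '' Ici 0) :
    IsArc (insert w (γ '' Ici 0)) (γ 0) w := by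
  let φ (t : ℝ) : ℝ := (1 - t)⁻¹ - 1
  have hφ : BijOn φ (Ico 0 1) (Ici 0) := by
    refine ⟨fun t ht => ?_, fun s _ t _ h => by simpa [φ] using h, fun s hs => ?_⟩
    · exact sub_nonneg.mpr ((one_le_inv₀ (sub_pos.mpr ht.2)).mpr (sub_le_self 1 ht.1))
    · have hs' : 1 ≤ s + 1 := le_add_of_nonneg_left hs
      exact ⟨1 - (s + 1)⁻¹, ⟨sub_nonneg.mpr (inv_le_one_of_one_le₀ hs'),
        sub_lt_self 1 (by positivity)⟩, by simp [φ]⟩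
  have hφc : ContinuousOn φ (Ico 0 1) := by
    refine ContinuousOn.sub (ContinuousOn.inv₀ (by fun_prop) ?_) continuousOn_const
    exact fun t ht => (sub_pos.mpr ht.2).ne'
  have hφlim : Tendsto φ (𝓝[Ico 0 1] 1) atTop := by
    refine tendsto_atTop_add_const_right _ _ (tendsto_inv_nhdsGT_zero.comp ?_)
    refine tendsto_nhdsWithin_iff.mpr ⟨?_, eventually_mem_of_tendsto_nhdsWithin tendsto_id |>.mono
      fun t ht => sub_pos.mpr ht.2⟩
    exact (Continuous.tendsto' (by fun_prop) 1 0 (sub_self 1)).mono_left nhdsWithin_le_nhds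
  let δ := Function.update (γ ∘ φ) 1 w
  have hδ : EqOn δ (γ ∘ φ) (Ico 0 1) := fun t ht => Function.update_of_ne ht.2.ne _ _
  have hδ1 : δ 1 = w := Function.update_self ..
  have hIcc : insert (1 : ℝ) (Ico 0 1) = Icc 0 1 := Ico_insert_right zero_le_one
  have himage : δ '' Ico 0 1 = γ '' Ici 0 := by rw [hδ.image_eq, image_comp, hφ.image_eq]
  refine ⟨δ, ?_, ?_, ?_, hδ1, ?_⟩
  · refine continuousOn_update_iff.mpr ?_
    rw [Icc_sdiff_right]
    exact ⟨hγ.comp hφc hφ.mapsTo, fun _ => hlim.comp hφlim⟩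
  · rw [← hIcc, injOn_insert right_notMem_Ico, hδ1, himage, hδ.injOn_iff]
    exact ⟨hinj.comp hφ.injOn hφ.mapsTo, hw⟩
  · simp [hδ (left_mem_Ico.mpr zero_lt_one), φ]
  · rw [← hIcc, image_insert_eq, hδ1, himage]

lemma iUnion_Icc_natCast : ⋃ n : ℕ, Icc (n : ℝ) (n + 1) = Ici 0 := by
  ext t
  simp only [mem_iUnion, mem_Icc, mem_Ici]
  exact ⟨fun ⟨n, hn, _⟩ => n.cast_nonneg.trans hn,
    fun ht => ⟨⌊t⌋₊, Nat.floor_le ht, (Nat.lt_floor_add_one t).le⟩⟩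

lemma locallyFinite_Icc_natCast : LocallyFinite fun n : ℕ => Icc (n : ℝ) (n + 1) := fun t => by
  refine ⟨Iio (t + 1), Iio_mem_nhds (lt_add_one t), (finite_Iio ⌈t + 1⌉₊).subset ?_⟩
  rintro n ⟨s, hs, hst⟩
  exact Nat.lt_ceil.mpr (hs.1.trans_lt hst)

lemma exists_continuousOn_Ici_of_isArc (hα : ∀ n, IsArc (α n) (x n) (x (n + 1))) :
    ∃ γ : ℝ → X, ContinuousOn γ (Ici 0) ∧ ∀ n : ℕ, InjOn γ (Icc n (n + 1)) ∧ γ n = x n ∧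
      γ '' Icc (n : ℝ) (n + 1) = α n := by
  choose δ hδ hinj h0 h1 himage using hα
  let γ (t : ℝ) : X := δ ⌊t⌋₊ (t - ⌊t⌋₊)
  have hsub (n : ℕ) : (fun t : ℝ => t - n) '' Icc (n : ℝ) (n + 1) = Icc 0 1 := by simp
  have hγ (n : ℕ) : EqOn γ (fun t => δ n (t - n)) (Icc n (n + 1)) := fun t ht => by
    rcases ht.2.eq_or_lt with h | h
    · have hfloor : ⌊t⌋₊ = n + 1 := by
        rw [h]
        exact_mod_cast Nat.floor_natCast (n + 1)
      simp only [γ, hfloor]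
      simp [h, h0, h1]
    · simp only [γ, (Nat.floor_eq_iff (n.cast_nonneg.trans ht.1)).mpr ⟨ht.1, h⟩]
  refine ⟨γ, ?_, fun n => ⟨?_, by simp [γ, h0], ?_⟩⟩
  · rw [← iUnion_Icc_natCast]
    refine locallyFinite_Icc_natCast.continuousOn_iUnion (fun n => isClosed_Icc) fun n => ?_
    exact ((hδ n).comp (by fun_prop) (mapsTo_iff_image_subset.mpr (hsub n).subset)).congr (hγ n)
  · exact (hγ n).injOn_iff.mpr ((hinj n).comp (sub_left_injective.injOn)
      (mapsTo_iff_image_subset.mpr (hsub n).subset))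
  · rw [(hγ n).image_eq, ← himage n, ← hsub n, image_image]

lemma exists_isArc_iUnion (hα : ∀ n, IsArc (α n) (x n) (x (n + 1)))
    (hsucc : ∀ n, α n ∩ α (n + 1) ⊆ {x (n + 1)}) (hdisj : ∀ n m, n + 2 ≤ m → Disjoint (α n) (α m))
    (hw : ∀ n, w ∉ α n) (hlim : Tendsto α atTop (𝓝 w).smallSets) :
    IsArc (insert w (⋃ n, α n)) (x 0) w := by
  obtain ⟨γ, hγ, h⟩ := exists_continuousOn_Ici_of_isArc hα
  choose hinj hγn himage using h
  have hunion : γ '' Ici 0 = ⋃ n, α n := by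
    rw [← iUnion_Icc_natCast, image_iUnion]
    exact iUnion_congr himage
  have hmem {t : ℝ} (ht : 0 ≤ t) : t ∈ Icc (⌊t⌋₊ : ℝ) (⌊t⌋₊ + 1) :=
    ⟨Nat.floor_le ht, (Nat.lt_floor_add_one t).le⟩
  have hγα {t : ℝ} (ht : 0 ≤ t) : γ t ∈ α ⌊t⌋₊ := himage _ ▸ mem_image_of_mem γ (hmem ht)
  have hγinj : InjOn γ (Ici 0) := by
    refine fun s hs t ht heq => ?_
    wlog hst : s ≤ t generalizing s t
    · exact (this t ht s hs heq.symm (le_of_not_ge hst)).symm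
    have hfloor : ⌊t⌋₊ < ⌊s⌋₊ + 2 := by
      by_contra! hle
      exact disjoint_left.mp (hdisj _ _ hle) (hγα hs) (heq ▸ hγα ht)
    rcases (Nat.floor_mono hst).eq_or_lt with hf | hf
    · exact hinj _ (hmem hs) (hf ▸ hmem ht) heq
    · have hf' : ⌊t⌋₊ = ⌊s⌋₊ + 1 := by omega
      have hs' : γ s = x (⌊s⌋₊ + 1) := hsucc _ ⟨hγα hs, hf' ▸ heq ▸ hγα ht⟩
      have := hinj _ (hmem hs) (right_mem_Icc.mpr (by simp)) (hs'.trans (by simp [← hγn]))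
      exact absurd this (Nat.lt_floor_add_one s).ne
  rw [← hunion, ← hγn 0, Nat.cast_zero]
  have hwγ : w ∉ γ '' Ici 0 := by simpa [hunion] using hw
  refine isArc_insert_image_Ici hγ hγinj (tendsto_def.mpr fun U hU => ?_) hwγ
  filter_upwards [tendsto_nat_floor_atTop.eventually (tendsto_smallSets_iff.mp hlim U hU),
    eventually_ge_atTop 0] with t hU ht using hU (hγα ht)

lemma exists_isArc_subset_iUnion [T2Space X] {B : ℕ → Set X} {r : ℕ → X}
    (hB : ∀ n, IsArc (B n) (r n) (r (n + 1))) (hdisj : ∀ n m, n + 2 ≤ m → Disjoint (B n) (B m))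
    (hr : r 0 ∉ B 1) (hw : ∀ n, w ∉ B n) (hlim : Tendsto B atTop (𝓝 w).smallSets) :
    ∃ A ⊆ insert w (⋃ n, B n), IsArc A (r 0) w := by
  let Tail (n : ℕ) := {s : Set X × X // IsArc s.1 s.2 (r (n + 1)) ∧ s.1 ⊆ B n ∧ s.2 ∉ B (n + 1)}
  have hstep (n : ℕ) (s : Tail n) : ∃ (s' : Tail (n + 1)), ∃ α ⊆ s.1.1, IsArc α s.1.2 s'.1.2 ∧
      s.1.1 ∩ s'.1.1 ⊆ {s'.1.2} := by
    obtain ⟨⟨σ, x⟩, hσ, hσB, hx⟩ := s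
    have hend : r (n + 2) ∉ σ := fun h =>
      disjoint_left.mp (hdisj n (n + 2) le_rfl) (hσB h) (hB (n + 2)).left_mem
    obtain ⟨x', hx', σ', hσ', harc, hmeet⟩ := (hB (n + 1)).symm.exists_first_hit hσ.isClosed
      ⟨r (n + 1), (hB (n + 1)).left_mem, hσ.right_mem⟩ hend
    have hne : x' ≠ x := fun h => hx (h ▸ hσ' harc.right_mem)
    obtain ⟨α, hα, hαarc⟩ := hσ.exists_subarc_left hx' hne
    exact ⟨⟨(σ', x'), harc.symm, hσ', disjoint_left.mp (hdisj n (n + 2) le_rfl) (hσB hx')⟩,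
      α, hα, hαarc, inter_comm σ σ' ▸ hmeet⟩
  choose next α hα harc hmeet using hstep
  let s : ∀ n, Tail n := fun n => n.rec ⟨(B 0, r 0), hB 0, subset_rfl, hr⟩ next
  have hαB (n : ℕ) : α n (s n) ⊆ B n := (hα n _).trans (s n).2.2.1
  refine ⟨_, insert_subset_insert (iUnion_mono hαB), exists_isArc_iUnion (x := fun n => (s n).1.2)
    (fun n => harc n (s n)) (fun n => ?_) (fun n m h => (hdisj n m h).mono (hαB n) (hαB m))
    (fun n h => hw n (hαB n h)) ?_⟩
  · exact (inter_subset_inter (hα n _) (hα (n + 1) _)).trans (hmeet n (s n))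
  · refine tendsto_smallSets_iff.mpr fun U hU => ?_
    filter_upwards [tendsto_smallSets_iff.mp hlim U hU] with n hn using (hαB n).trans hn

end Concatenation

lemma IsArc.accPt_left {X : Type*} [TopologicalSpace X] {S : Set X} {x y : X} (h : IsArc S x y) :
    AccPt x (𝓟 S) := by
  rw [accPt_principal_iff_clusterPt, ← mem_closure_iff_clusterPt]
  exact closure_mono (sdiff_subset_sdiff_right (by simp)) (h.subset_closure_sdiff_pair h.left_mem)

lemma region_subset_ball {K : Set Plane} {p w : Plane} {ρ : ℝ} (hK : sphere w ρ ⊆ K)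
    (hp : p ∈ ball w ρ) : region K p ⊆ ball w ρ :=
  region_subset_of_frontier_subset hp (frontier_ball_subset_sphere.trans hK)

section Access

variable {Y e F N : Set Plane} {w v p q : Plane}

lemma IsArc.subset_closure_region_of_mem_ball {J Z : Set Plane} {x y z : Plane} {r : ℝ}
    (hJ : IsArc J x y) (hZ : IsCompact Z) (hZJ : Z ∩ J ⊆ {x, y})
    (hr : Disjoint (ball z r) (Z ∪ {x, y})) (hz : z ∈ J) (hp : p ∈ ball z r) (hpJ : p ∉ J) :
    J ⊆ closure (region (Z ∪ J) p) := by
  rw [Set.disjoint_left] at hr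
  have hZJc : IsClosed (Z ∪ J) := hZ.isClosed.union hJ.isClosed
  obtain ⟨m, ⟨hm, hmz⟩, hmcl⟩ := exists_mem_closure_region_of_mem_ball hZJc
    (not_or.mpr ⟨fun h => hr hp (.inl h), hpJ⟩) (.inr hz) hp
  have hmO := hr hmz
  exact hJ.subset_closure_of_frontier_subset hZ hZJ (frontier_region_subset hZJc p)
    ((disjoint_region _ p).mono_right subset_union_right)
    (hm.resolve_left fun h => hmO (.inl h)) (fun h => hmO (.inr (.inl h)))
    (fun h => hmO (.inr (.inr h))) hmcl

lemma IsArc.exists_isOpen_subset_accPt (he : IsArc e w v) (hY : IsCompact Y)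
    (hYe : Y ∩ e ⊆ {w, v}) (hFe : Disjoint F (Y ∪ e)) (hF : AccPt w (𝓟 (e ∩ closure F)))
    (hN : N ∈ 𝓝 w) :
    ∃ U ⊆ N, IsOpen U ∧ IsPreconnected U ∧ Disjoint U (Y ∪ e) ∧ (U ∩ F).Nonempty ∧
      AccPt w (𝓟 (e ∩ closure U)) := by
  obtain ⟨ρ, hρ, hρN⟩ := Metric.mem_nhds_iff.mp hN
  obtain ⟨c, R, J, hR, hJ, rfl, hmeet, hJρ⟩ := he.symm.exists_split_right (ball_mem_nhds w hρ)
  have hwR : w ∉ R := fun h => hJ.ne (hmeet.subset ⟨h, hJ.right_mem⟩).symm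
  let Z := Y ∪ sphere w ρ ∪ R
  have hZ : IsCompact Z := (hY.union (isCompact_sphere w ρ)).union hR.isCompact
  have hZJ : Z ∩ J ⊆ {w, c} := by
    rintro z ⟨(hzY | hzρ) | hzR, hzJ⟩
    · rcases hYe ⟨hzY, .inr hzJ⟩ with rfl | rfl
      · exact .inl rfl
      · exact .inr (hmeet.subset ⟨hR.left_mem, hzJ⟩)
    · exact absurd hzρ (mem_ball.mp (hJρ hzJ)).ne
    · exact .inr (hmeet.subset ⟨hzR, hzJ⟩)
  obtain ⟨y, ⟨hyR, hye, hyF⟩, hyw⟩ :=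
    accPt_iff_nhds.mp hF _ (hR.isClosed.isOpen_compl.mem_nhds hwR)
  have hyJ : y ∈ J := hye.resolve_left hyR
  have hyZ : y ∉ Z := fun h => (hZJ ⟨h, hyJ⟩).elim hyw fun hyc => hyR (hyc ▸ hR.right_mem)
  have hO : IsOpen (ball w ρ \ (Z ∪ {w, c})) :=
    isOpen_ball.sdiff (hZ.isClosed.union (toFinite {w, c}).isClosed)
  obtain ⟨r, hr, hrO⟩ := Metric.isOpen_iff.mp hO y
    ⟨hJρ hyJ, not_or.mpr ⟨hyZ, not_or.mpr ⟨hyw, fun h => hyR (h ▸ hR.right_mem)⟩⟩⟩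
  obtain ⟨p, hpF, hpy⟩ := Metric.mem_closure_iff.mp hyF r hr
  have hpO := hrO (mem_ball'.mpr hpy)
  have hpZJ : p ∉ Z ∪ J := not_or.mpr ⟨fun h => hpO.2 (.inl h),
    fun h => disjoint_left.mp hFe hpF (.inr (.inr h))⟩
  have hJcl : J ⊆ closure (region (Z ∪ J) p) :=
    hJ.symm.subset_closure_region_of_mem_ball hZ hZJ (disjoint_left.mpr fun z hz => (hrO hz).2) hyJ
      (mem_ball'.mpr hpy) fun h => hpZJ (.inr h)
  refine ⟨region (Z ∪ J) p, (region_subset_ball ?_ hpO.1).trans hρN,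
    isOpen_region (hZ.isClosed.union hJ.isClosed) p,
    isPreconnected_region _ p, (disjoint_region _ p).mono_right ?_, ⟨p, mem_region_self hpZJ, hpF⟩,
    hJ.symm.accPt_left.mono (principal_mono.mpr (subset_inter subset_union_right hJcl))⟩
  · exact fun z hz => .inl (.inl (.inr hz))
  · exact union_subset (fun z hz => .inl (.inl (.inl hz)))
      (union_subset_union_left J subset_union_right)

/-- A stage in the construction of an arc that approaches the end `w` of the arc `e` within `F`:
the current point, a domain of `F` around it that still accumulates on `e` at `w`, and the
neighbourhood of `w` to which the following domains are confined. -/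
structure AccessStage (e F : Set Plane) (w : Plane) where
  domain : Set Plane
  point : Plane
  nhd : Set Plane
  isOpen_domain : IsOpen domain
  isPreconnected_domain : IsPreconnected domain
  domain_subset : domain ⊆ F
  point_mem : point ∈ domain
  accPt : AccPt w (𝓟 (e ∩ closure domain))
  nhd_mem : nhd ∈ 𝓝 w
  point_notMem : point ∉ nhd

lemma AccessStage.exists_next (he : IsArc e w v) (hY : IsCompact Y) (hYe : Y ∩ e ⊆ {w, v})
    (s : AccessStage e (region (Y ∪ e) p) w) {V : Set Plane} (hV : V ∈ 𝓝 w) :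
    ∃ t : AccessStage e (region (Y ∪ e) p) w, ∃ B ⊆ s.domain, IsArc B s.point t.point ∧
      t.domain ⊆ s.nhd ∧ t.nhd ⊆ s.nhd ∩ (V \ B) := by
  obtain ⟨U, hUN, hUo, hUc, hUd, ⟨q, hqU, hq⟩, hUacc⟩ := he.exists_isOpen_subset_accPt hY hYe
    ((disjoint_region _ p).mono_left s.domain_subset) s.accPt s.nhd_mem
  obtain ⟨B, hB, harc⟩ := exists_isArc_of_isOpen s.isOpen_domain s.isPreconnected_domain
    s.point_mem hq (ne_of_mem_of_not_mem (hUN hqU) s.point_notMem).symm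
  have hwB : w ∉ B := fun h =>
    notMem_of_mem_region (s.domain_subset (hB h)) (.inr he.left_mem)
  exact ⟨{  domain := U
            point := q
            nhd := s.nhd ∩ (V \ B)
            isOpen_domain := hUo
            isPreconnected_domain := hUc
            domain_subset := subset_region hUc hUd hqU (s.domain_subset hq)
            point_mem := hqU
            accPt := hUacc
            nhd_mem := inter_mem s.nhd_mem
              (inter_mem hV (harc.isClosed.isOpen_compl.mem_nhds hwB))
            point_notMem := fun h => h.2.2 harc.right_mem }, B, hB, harc, hUN, subset_rfl⟩

lemma IsArc.exists_isArc_subset_region (he : IsArc e w v) (hY : IsCompact Y)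
    (hYe : Y ∩ e ⊆ {w, v}) (hcl : e ⊆ closure (region (Y ∪ e) p)) (hq : q ∈ region (Y ∪ e) p) :
    ∃ A ⊆ insert w (region (Y ∪ e) p), IsArc A q w := by
  obtain ⟨V, hV⟩ := (𝓝 w).exists_antitone_basis
  choose next B hB harc hdomain hnhd using
    fun s n => AccessStage.exists_next (p := p) he hY hYe s (hV.mem n)
  have hwq : w ≠ q := by
    rintro rfl
    exact notMem_of_mem_region hq (.inr he.left_mem)
  let s₀ : AccessStage e (region (Y ∪ e) p) w :=
    { domain := region (Y ∪ e) p
      point := q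
      nhd := {q}ᶜ
      isOpen_domain := isOpen_region (hY.isClosed.union he.isClosed) p
      isPreconnected_domain := isPreconnected_region _ p
      domain_subset := subset_rfl
      point_mem := hq
      accPt := he.accPt_left.mono (principal_mono.mpr (subset_inter subset_rfl hcl))
      nhd_mem := isOpen_compl_singleton.mem_nhds hwq
      point_notMem := fun h => h rfl }
  let s (n : ℕ) : AccessStage e (region (Y ∪ e) p) w := n.rec s₀ fun n t => next t n
  have hBs (n : ℕ) : B (s n) n ⊆ region (Y ∪ e) p := (hB _ n).trans (s n).domain_subset
  have hanti : Antitone fun n => (s n).nhd :=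
    antitone_nat_of_succ_le fun n => (hnhd (s n) n).trans (inter_subset_left)
  have hBnhd {m n : ℕ} (h : n + 1 ≤ m) : B (s m) m ⊆ (s n).nhd := by
    obtain ⟨m, rfl⟩ := Nat.exists_eq_succ_of_ne_zero (Nat.ne_zero_of_lt h)
    exact (hB _ _).trans ((hdomain _ _).trans (hanti (Nat.le_of_succ_le_succ h)))
  obtain ⟨A, hA, hAarc⟩ := exists_isArc_subset_iUnion (B := fun n => B (s n) n)
    (r := fun n => (s n).point) (w := w) (fun n => harc (s n) n)
    (fun n m h => disjoint_left.mpr fun z hz hz' => ((hnhd _ n).trans inter_subset_right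
      (hBnhd (n := n + 1) h hz')).2 hz)
    (fun h => s₀.point_notMem (hBnhd (n := 0) le_rfl h))
    (fun n h => notMem_of_mem_region (hBs n h) (.inr he.left_mem))
    (tendsto_smallSets_iff.mpr fun U hU => by
      obtain ⟨k, hk⟩ := hV.mem_iff.mp hU
      filter_upwards [eventually_ge_atTop (k + 2)] with n hn
      exact (hBnhd hn).trans (((hnhd (s k) k).trans
        (inter_subset_right.trans sdiff_subset)).trans hk))
  exact ⟨A, hA.trans (insert_subset_insert (iUnion_subset hBs)), hAarc⟩

end Access

section Parallel

lemma isPreconnected_ball_sdiff_singleton {E : Type*} [NormedAddCommGroup E] [NormedSpace ℝ E]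
    (hE : 1 < Module.rank ℝ E) (c : E) {r : ℝ} (hr : 0 < r) :
    IsPreconnected (ball c r \ {c}) := by
  have hball := (OpenPartialHomeomorph.univBall c r).image_source_eq_target
  rw [OpenPartialHomeomorph.univBall_source, OpenPartialHomeomorph.univBall_target c hr] at hball
  have hinj : InjOn (OpenPartialHomeomorph.univBall c r) univ := by
    simpa using (OpenPartialHomeomorph.univBall c r).injOn
  have hsdiff : ball c r \ {c} = OpenPartialHomeomorph.univBall c r '' {0}ᶜ := by
    rw [compl_eq_univ_sdiff, hinj.image_sdiff_subset (subset_univ _), hball, image_singleton,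
      OpenPartialHomeomorph.univBall_apply_zero]
  rw [hsdiff]
  exact (isConnected_compl_singleton_of_one_lt_rank hE 0).isPreconnected.image _
    (OpenPartialHomeomorph.continuous_univBall c r).continuousOn

lemma one_lt_rank_plane : 1 < Module.rank ℝ Plane := by
  rw [rank_prod', Module.rank_self]
  norm_num

namespace IsArc

variable {S Y e F H : Set Plane} {u v x p : Plane}

lemma exists_isPreconnected_disjoint (hS : IsArc S u v) (hF : F.Finite) (hFS : Disjoint F S) :
    ∃ W ⊇ F, IsCompact W ∧ IsPreconnected W ∧ Disjoint W S := by
  rcases F.eq_empty_or_nonempty with rfl | ⟨b, hb⟩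
  · exact ⟨∅, subset_rfl, isCompact_empty, isPreconnected_empty, empty_disjoint S⟩
  have hFS' {y} (hy : y ∈ F) : y ∉ S := disjoint_left.mp hFS hy
  have hjoin (y : F) : JoinedIn (region S b) b y :=
    joinedIn_region hS.isClosed (hS.mem_region (hFS' hb) (hFS' y.2))
  choose γ hγ using hjoin
  have : Finite F := hF
  refine ⟨⋃ y, range (γ y), fun y hy => mem_iUnion.mpr ⟨⟨y, hy⟩, 1, (γ _).target⟩,
    isCompact_iUnion fun y => isCompact_range (γ y).continuous,
    isPreconnected_iUnion ⟨b, mem_iInter.mpr fun y => ⟨0, (γ y).source⟩⟩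
      fun y => isPreconnected_range (γ y).continuous, ?_⟩
  exact (disjoint_region S b).mono_left
    (iUnion_subset fun y => range_subset_iff.mpr (hγ y))

lemma exists_subset_closure_region (he : IsArc e u v) (hY : IsCompact Y) (hYe : Y ∩ e ⊆ {u, v})
    (hx : x ∈ e \ {u, v}) (hxH : x ∈ closure H) (hH : Disjoint H e) :
    ∃ p ∈ H \ (Y ∪ e), e ⊆ closure (region (Y ∪ e) p) := by
  have hclosed : IsClosed (Y ∪ {u, v}) := hY.isClosed.union (toFinite _).isClosed
  have hxY : x ∉ Y ∪ {u, v} := fun h => hx.2 (h.elim (fun h => hYe ⟨h, hx.1⟩) id)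
  obtain ⟨r, hr, hball⟩ := Metric.isOpen_iff.mp hclosed.isOpen_compl x hxY
  obtain ⟨p, hp, hpH⟩ := mem_closure_iff.mp hxH _ isOpen_ball (mem_ball_self hr)
  have hpY : p ∉ Y ∪ e := not_or.mpr ⟨fun h => hball hp (.inl h), disjoint_left.mp hH hpH⟩
  have hYe' : IsClosed (Y ∪ e) := hY.isClosed.union he.isClosed
  obtain ⟨m, ⟨hm, hmball⟩, hmcl⟩ :=
    exists_mem_closure_region_of_mem_ball hYe' hpY (.inr hx.1) hp
  obtain ⟨hmY, hmends⟩ := not_or.mp (hball hmball)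
  exact ⟨p, ⟨hpH, hpY⟩, he.subset_closure_of_frontier_subset hY hYe
    (frontier_region_subset hYe' p) ((disjoint_region _ p).mono_right subset_union_right)
    (hm.resolve_left hmY) (fun h => hmends (.inl h)) (fun h => hmends (.inr h)) hmcl⟩

lemma exists_parallel (he : IsArc e u v) (hY : IsCompact Y) (hYe : Y ∩ e ⊆ {u, v})
    (hcl : e ⊆ closure (region (Y ∪ e) p)) (hp : p ∉ Y ∪ e) :
    ∃ A, IsArc A u v ∧ A \ {u, v} ⊆ region (Y ∪ e) p := by
  obtain ⟨A₁, hA₁, harc₁⟩ := he.exists_isArc_subset_region hY hYe hcl (mem_region_self hp)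
  obtain ⟨A₂, hA₂, harc₂⟩ := he.symm.exists_isArc_subset_region hY (pair_comm u v ▸ hYe) hcl
    (mem_region_self hp)
  obtain ⟨A, hA, harc⟩ := exists_subset_union harc₁.symm harc₂ he.ne
  refine ⟨A, harc, fun z hz => ?_⟩
  rcases hA hz.1 with h | h
  · exact (hA₁ h).resolve_left fun h => hz.2 (.inl h)
  · exact (hA₂ h).resolve_left fun h => hz.2 (.inr h)

end IsArc

end Parallel

end PlaneTopology

namespace PlaneEmbedding

open Set Metric Topology PlaneTopology SimpleGraph

variable {V : Type*} {G T : SimpleGraph V}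

section Drawing

variable (E : PlaneEmbedding G)

/-- The point set of the arc drawn for the edge `xy`. -/
def edge (x y : V) : Set Plane := E.arc x y '' Icc 0 1

/-- The union of the arcs drawn for a set `F` of edges. The drawn graph itself is
`E.draw G.edgeSet`, and a walk `p` is drawn as `E.draw p.edgeSet`. -/
def draw (F : Set (Sym2 V)) : Set Plane := ⋃ x, ⋃ y, ⋃ _ : s(x, y) ∈ F, E.edge x y

variable {E} {F F' : Set (Sym2 V)} {u v w x y a b t : V} {z : Plane}

lemma mem_draw : z ∈ E.draw F ↔ ∃ x y, s(x, y) ∈ F ∧ z ∈ E.edge x y := by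
  simp only [draw, mem_iUnion, exists_prop]

lemma edge_subset_draw (h : s(x, y) ∈ F) : E.edge x y ⊆ E.draw F :=
  fun _ hz => mem_draw.mpr ⟨x, y, h, hz⟩

lemma draw_mono (h : F ⊆ F') : E.draw F ⊆ E.draw F' := fun _ hz =>
  let ⟨x, y, hxy, hz⟩ := mem_draw.mp hz
  mem_draw.mpr ⟨x, y, h hxy, hz⟩

lemma draw_empty : E.draw ∅ = ∅ := by
  simp [draw]

lemma draw_union : E.draw (F ∪ F') = E.draw F ∪ E.draw F' := by
  simp only [draw, mem_union, iUnion_or, iUnion_union_distrib]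

lemma isArc_edge (h : G.Adj x y) : IsArc (E.edge x y) (E.pos x) (E.pos y) :=
  ⟨E.arc x y, (E.arc_cont h).continuousOn, E.arc_injOn h, E.arc_zero h, E.arc_one h, rfl⟩

lemma edge_comm (h : G.Adj x y) : E.edge y x = E.edge x y := by
  have key (x y : V) (h : G.Adj x y) : E.edge y x ⊆ E.edge x y := by
    rintro _ ⟨t, ht, rfl⟩
    exact ⟨1 - t, ⟨sub_nonneg.mpr ht.2, sub_le_self 1 ht.1⟩, (E.arc_symm h t).symm⟩
  exact (key x y h).antisymm (key y x h.symm)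

lemma edge_congr (h : G.Adj a b) (he : s(x, y) = s(a, b)) : E.edge x y = E.edge a b := by
  rcases Sym2.eq_iff.mp he with ⟨rfl, rfl⟩ | ⟨rfl, rfl⟩
  · rfl
  · exact edge_comm h

lemma draw_singleton (h : G.Adj x y) : E.draw {s(x, y)} = E.edge x y := by
  refine Subset.antisymm (fun z hz => ?_) (edge_subset_draw rfl)
  obtain ⟨a, b, hab, hz⟩ := mem_draw.mp hz
  rwa [← edge_congr h hab]

lemma pos_mem_pair_iff : E.pos w ∈ ({E.pos x, E.pos y} : Set Plane) ↔ w ∈ s(x, y) := by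
  simp [E.pos_inj.eq_iff]

lemma mem_of_pos_mem_edge (h : G.Adj x y) (hw : E.pos w ∈ E.edge x y) : w ∈ s(x, y) := by
  obtain ⟨t, ht, he⟩ := hw
  rcases eq_endpoints_or_mem_Ioo_of_mem_Icc ht with rfl | rfl | ht
  · rw [E.arc_zero h] at he
    exact Sym2.mem_iff.mpr (.inl (E.pos_inj he.symm))
  · rw [E.arc_one h] at he
    exact Sym2.mem_iff.mpr (.inr (E.pos_inj he.symm))
  · exact absurd ⟨t, ht, he⟩ (E.arc_avoid h w)

lemma exists_mem_of_pos_mem_draw (hF : F ⊆ G.edgeSet) (hw : E.pos w ∈ E.draw F) :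
    ∃ e ∈ F, w ∈ e :=
  let ⟨_, _, hxy, hw⟩ := mem_draw.mp hw
  ⟨_, hxy, mem_of_pos_mem_edge (hF hxy) hw⟩

lemma edge_inter_edge_subset (h : G.Adj x y) (h' : G.Adj a b) (hne : s(x, y) ≠ s(a, b)) :
    E.edge x y ∩ E.edge a b ⊆ E.pos '' {w | w ∈ s(x, y) ∧ w ∈ s(a, b)} := by
  intro z hz
  rcases (E.arc_meet h h' hne hz).1 with rfl | rfl
  · exact ⟨x, ⟨Sym2.mem_mk_left x y, mem_of_pos_mem_edge h' hz.2⟩, rfl⟩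
  · exact ⟨y, ⟨Sym2.mem_mk_right x y, mem_of_pos_mem_edge h' hz.2⟩, rfl⟩

lemma draw_inter_draw_subset (hF : F ⊆ G.edgeSet) (hF' : F' ⊆ G.edgeSet) (hd : Disjoint F F') :
    E.draw F ∩ E.draw F' ⊆ E.pos '' {w | (∃ e ∈ F, w ∈ e) ∧ ∃ e ∈ F', w ∈ e} := by
  rintro z ⟨hz, hz'⟩
  obtain ⟨x, y, hxy, hz⟩ := mem_draw.mp hz
  obtain ⟨a, b, hab, hz'⟩ := mem_draw.mp hz'
  obtain ⟨w, hw, rfl⟩ := edge_inter_edge_subset (hF hxy) (hF' hab)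
    (hd.ne_of_mem hxy hab) ⟨hz, hz'⟩
  exact ⟨w, ⟨⟨_, hxy, hw.1⟩, ⟨_, hab, hw.2⟩⟩, rfl⟩

lemma draw_sdiff_union_edge (h : G.Adj u v) :
    E.draw (G.edgeSet \ {s(u, v)}) ∪ E.edge u v = E.draw G.edgeSet := by
  rw [← draw_singleton h, ← draw_union,
    sdiff_union_of_subset (singleton_subset_iff.mpr (G.mem_edgeSet.mpr h))]

lemma draw_sdiff_inter_edge_subset (h : G.Adj u v) :
    E.draw (G.edgeSet \ {s(u, v)}) ∩ E.edge u v ⊆ {E.pos u, E.pos v} := by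
  rw [← draw_singleton h]
  refine (draw_inter_draw_subset sdiff_subset (singleton_subset_iff.mpr h)
    disjoint_sdiff_left).trans ?_
  rintro _ ⟨w, ⟨-, _, rfl, hw⟩, rfl⟩
  exact pos_mem_pair_iff.mpr hw

lemma isCompact_draw [Finite V] (hF : F ⊆ G.edgeSet) : IsCompact (E.draw F) :=
  isCompact_iUnion fun _ => isCompact_iUnion fun _ => isCompact_iUnion fun h =>
    (isArc_edge (hF h)).isCompact

end Drawing

section Walk

variable {E : PlaneEmbedding G} {u v w t : V} {A : Set Plane} {m : Plane}

lemma edgeSet_walk_subset (hle : T ≤ G) (p : T.Walk u v) : p.edgeSet ⊆ G.edgeSet :=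
  fun _ he => edgeSet_mono hle (p.edges_subset_edgeSet he)

lemma draw_walk_subset (hle : T ≤ G) (p : T.Walk u v) : E.draw p.edgeSet ⊆ E.draw G.edgeSet :=
  draw_mono (edgeSet_walk_subset hle p)

lemma mem_support_of_pos_mem_draw (hle : T ≤ G) {p : T.Walk u v}
    (hw : E.pos w ∈ E.draw p.edgeSet) : w ∈ p.support := by
  obtain ⟨e, he, hwe⟩ := exists_mem_of_pos_mem_draw (edgeSet_walk_subset hle p) hw
  exact p.mem_support_of_mem_edges he hwe

/-- Two walks from the same vertex that share no further vertex. -/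
def MeetAtStart (p : T.Walk t u) (q : T.Walk t v) : Prop :=
  ∀ w ∈ p.support, w ∈ q.support → w = t

lemma MeetAtStart.symm {p : T.Walk t u} {q : T.Walk t v} (h : MeetAtStart p q) :
    MeetAtStart q p :=
  fun w hq hp => h w hp hq

lemma MeetAtStart.isPath_append {p : T.Walk t u} {q : T.Walk t v} (h : MeetAtStart p q)
    (hp : p.IsPath) (hq : q.IsPath) : (p.reverse.append q).IsPath := by
  refine Walk.IsPath.mk' ?_
  rw [Walk.support_append, Walk.support_reverse]
  refine (List.nodup_reverse.mpr hp.support_nodup).append hq.support_nodup.tail fun x hx hx' => ?_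
  obtain rfl := h x (List.mem_reverse.mp hx) (List.mem_of_mem_tail hx')
  have hnodup := hq.support_nodup
  rw [← Walk.cons_tail_support] at hnodup
  exact (List.nodup_cons.mp hnodup).1 hx'

lemma MeetAtStart.draw_inter_subset (hle : T ≤ G) {p : T.Walk t u} {q : T.Walk t v}
    (h : MeetAtStart p q) : E.draw p.edgeSet ∩ E.draw q.edgeSet ⊆ {E.pos t} := by
  have hd : Disjoint p.edgeSet q.edgeSet := by
    refine disjoint_left.mpr fun e => e.inductionOn fun x y hp hq => ?_
    have hx := h x (p.fst_mem_support_of_mem_edges hp) (q.fst_mem_support_of_mem_edges hq)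
    have hy := h y (p.snd_mem_support_of_mem_edges hp) (q.snd_mem_support_of_mem_edges hq)
    exact (p.adj_of_mem_edges hp).ne (hx.trans hy.symm)
  refine (draw_inter_draw_subset (edgeSet_walk_subset hle p)
    (edgeSet_walk_subset hle q) hd).trans ?_
  rintro _ ⟨w, ⟨⟨e, he, hwe⟩, ⟨f, hf, hwf⟩⟩, rfl⟩
  exact congrArg E.pos
    (h w (p.mem_support_of_mem_edges he hwe) (q.mem_support_of_mem_edges hf hwf))

lemma exists_median (hT : T.IsTree) {p : T.Walk u v} (hp : p.IsPath) (w : V) :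
    ∃ t, ∃ (Pu : T.Walk t u) (Pv : T.Walk t v) (Pw : T.Walk t w),
      Pu.IsPath ∧ Pv.IsPath ∧ Pw.IsPath ∧ p = Pu.reverse.append Pv ∧
      MeetAtStart Pu Pv ∧ MeetAtStart Pu Pw ∧ MeetAtStart Pv Pw := by
  classical
  obtain ⟨r, hr, -⟩ := hT.existsUnique_path w u
  obtain ⟨t, htp, htr, hfirst⟩ := r.exists_mem_support_forall_mem_support_imp_eq p.support.toFinset
    ⟨u, by simp⟩
  obtain ⟨a, b, ha, hb, rfl⟩ := hp.mem_support_iff_exists_append.mp (List.mem_toFinset.mp htp)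
  have hmid (x : V) (hx : x ∈ (a.append b).support)
      (hxr : x ∈ (r.takeUntil t htr).reverse.support) : x = t :=
    hfirst x (List.mem_toFinset.mpr hx) (by simpa using hxr)
  refine ⟨t, a.reverse, b, (r.takeUntil t htr).reverse, ha.reverse, hb, (hr.takeUntil htr).reverse,
    by rw [Walk.reverse_reverse], fun x hx hx' => ?_, fun x hx => hmid x ?_, fun x hx => hmid x ?_⟩
  · by_contra hne
    exact hp.ne_of_mem_support_of_append hne (by simpa using hx) hx' rfl
  · exact (Walk.mem_support_append_iff a b).mpr (.inl (by simpa using hx))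
  · exact (Walk.mem_support_append_iff a b).mpr (.inr hx)

lemma draw_cons (hle : T ≤ G) (h : T.Adj u v) (p : T.Walk v w) :
    E.draw (p.cons h).edgeSet = E.edge u v ∪ E.draw p.edgeSet := by
  rw [Walk.edgeSet_cons, insert_eq, draw_union, draw_singleton (hle h)]

lemma draw_isPath_self {p : T.Walk u u} (hp : p.IsPath) : E.draw p.edgeSet = ∅ := by
  rw [Walk.eq_nil_iff_nil.mpr (Walk.isPath_iff_nil.mp hp), Walk.edgeSet_nil, draw_empty]

lemma isArc_draw_walk (hle : T ≤ G) {p : T.Walk u v} (hp : p.IsPath) (huv : u ≠ v) :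
    IsArc (E.draw p.edgeSet) (E.pos u) (E.pos v) := by
  induction p with
  | nil => exact absurd rfl huv
  | @cons a b c h p ih =>
    rw [draw_cons hle h]
    obtain ⟨hp, ha⟩ := (Walk.cons_isPath_iff h p).mp hp
    obtain rfl | hbc := eq_or_ne b c
    · rw [draw_isPath_self hp, union_empty]
      exact isArc_edge (hle h)
    · have hmeet : MeetAtStart (Walk.cons h.symm .nil) p := by
        intro w hw hwp
        obtain rfl | rfl : w = b ∨ w = a := by simpa using hw
        · rfl
        · exact absurd hwp ha
      have hba : E.draw (Walk.cons h.symm .nil).edgeSet = E.edge a b := by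
        rw [draw_cons hle, Walk.edgeSet_nil, draw_empty, union_empty, edge_comm (hle h)]
      exact (isArc_edge (hle h)).union (ih hp hbc) (hba ▸ hmeet.draw_inter_subset hle)

lemma isArc_union_draw_walk (hle : T ≤ G) {p : T.Walk u v} (hp : p.IsPath)
    (hA : IsArc A m (E.pos u)) (hd : A ∩ E.draw p.edgeSet ⊆ {E.pos u}) :
    IsArc (A ∪ E.draw p.edgeSet) m (E.pos v) := by
  obtain rfl | huv := eq_or_ne u v
  · rwa [draw_isPath_self hp, union_empty]
  · exact hA.union (isArc_draw_walk hle hp huv) hd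

end Walk

section Chords

/-- A simple arc joining two vertices without crossing the drawn graph. -/
structure IsChord (E : PlaneEmbedding G) (S : Set Plane) (u v : V) : Prop where
  isArc : IsArc S (E.pos u) (E.pos v)
  inter_draw_subset : S ∩ E.draw G.edgeSet ⊆ {E.pos u, E.pos v}

variable {E : PlaneEmbedding G} {S : Set Plane} {u v w a b : V} {p q x : Plane}

namespace IsChord

lemma ne (hS : E.IsChord S u v) : u ≠ v :=
  fun h => hS.isArc.ne (congrArg E.pos h)

lemma mem_of_pos_mem (hS : E.IsChord S u v) (hw : E.pos w ∈ E.draw G.edgeSet)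
    (h : E.pos w ∈ S) : w ∈ s(u, v) :=
  pos_mem_pair_iff.mp (hS.inter_draw_subset ⟨h, hw⟩)

lemma erase_union_edge (hab : G.Adj a b) :
    E.draw (G.edgeSet \ {s(a, b)}) ∪ S ∪ E.edge a b = E.draw G.edgeSet ∪ S := by
  rw [union_right_comm, draw_sdiff_union_edge hab]

lemma erase_inter_edge_subset (hS : E.IsChord S u v) (hab : G.Adj a b) :
    (E.draw (G.edgeSet \ {s(a, b)}) ∪ S) ∩ E.edge a b ⊆ {E.pos a, E.pos b} := by
  rw [union_inter_distrib_right]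
  refine union_subset (draw_sdiff_inter_edge_subset hab) fun z hz => ?_
  have hpos (w : V) (hw : E.pos w ∈ E.edge a b) : E.pos w ∈ ({E.pos a, E.pos b} : Set Plane) :=
    pos_mem_pair_iff.mpr (mem_of_pos_mem_edge hab hw)
  rcases hS.inter_draw_subset ⟨hz.1, edge_subset_draw hab hz.2⟩ with rfl | rfl
  · exact hpos u hz.2
  · exact hpos v hz.2

variable [Finite V]

lemma isCompact_draw_union (hS : E.IsChord S u v) : IsCompact (E.draw G.edgeSet ∪ S) :=
  (isCompact_draw subset_rfl).union hS.isArc.isCompact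

lemma isCompact_erase_union (hS : E.IsChord S u v) :
    IsCompact (E.draw (G.edgeSet \ {s(a, b)}) ∪ S) :=
  (isCompact_draw sdiff_subset).union hS.isArc.isCompact

lemma edge_subset_closure_face (hS : E.IsChord S u v) (hab : G.Adj a b)
    (hx : x ∈ E.edge a b \ {E.pos a, E.pos b})
    (hcl : x ∈ closure (region (E.draw G.edgeSet ∪ S) q)) :
    E.edge a b ⊆ closure (region (E.draw G.edgeSet ∪ S) q) := by
  refine (isArc_edge hab).subset_closure_of_frontier_subset hS.isCompact_erase_union
    (hS.erase_inter_edge_subset hab) ?_ ?_ hx.1 (fun h => hx.2 (.inl h)) (fun h => hx.2 (.inr h))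
    hcl
  · rw [erase_union_edge hab]
    exact frontier_region_subset hS.isCompact_draw_union.isClosed q
  · exact (disjoint_region _ q).mono_right ((edge_subset_draw hab).trans subset_union_left)

lemma frontier_face_subset_of_forall_notMem_closure (hS : E.IsChord S u v)
    (hw : ∀ x, G.Adj w x → ∀ z ∈ E.edge w x \ {E.pos w, E.pos x},
      z ∉ closure (region (E.draw G.edgeSet ∪ S) q)) :
    frontier (region (E.draw G.edgeSet ∪ S) q) ⊆
      insert (E.pos w) (E.draw (G.edgeSet \ G.incidenceSet w) ∪ S ∪ E.pos '' {w}ᶜ) := by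
  intro z hz
  rcases frontier_region_subset hS.isCompact_draw_union.isClosed q hz with hzG | hzS
  · obtain ⟨x, y, hxy, hzxy⟩ := mem_draw.mp hzG
    by_cases hwxy : w ∈ s(x, y)
    · obtain ⟨x', hx'⟩ := Sym2.mem_iff_exists.mp hwxy
      rw [hx'] at hxy
      rw [edge_congr hxy hx'] at hzxy
      by_cases hends : z ∈ ({E.pos w, E.pos x'} : Set Plane)
      · rcases hends with rfl | rfl
        · exact mem_insert _ _
        · exact .inr (.inr (mem_image_of_mem E.pos (G.ne_of_adj hxy).symm))
      · exact absurd hz.1 (hw x' hxy z ⟨hzxy, hends⟩)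
    · have hmem : s(x, y) ∈ G.edgeSet \ G.incidenceSet w := ⟨hxy, fun h => hwxy h.2⟩
      exact .inr (.inl (.inl (edge_subset_draw hmem hzxy)))
  · exact .inr (.inl (.inr hzS))

lemma exists_mem_edge_mem_closure_face (hS : E.IsChord S u v) (hwS : E.pos w ∉ S)
    (hw : E.pos w ∈ E.draw G.edgeSet)
    (hcl : E.pos w ∈ closure (region (E.draw G.edgeSet ∪ S) q)) :
    ∃ x, G.Adj w x ∧ ∃ z ∈ E.edge w x \ {E.pos w, E.pos x},
      z ∈ closure (region (E.draw G.edgeSet ∪ S) q) := by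
  by_contra! hcon
  set F := region (E.draw G.edgeSet ∪ S) q
  set K := E.draw (G.edgeSet \ G.incidenceSet w) ∪ S ∪ E.pos '' {w}ᶜ
  have hK : IsClosed K := (((isCompact_draw sdiff_subset).union hS.isArc.isCompact).union
    (toFinite _).isCompact).isClosed
  have hwK : E.pos w ∉ K := by
    rintro ((hwK | hwK) | ⟨x, hx, hxw⟩)
    · obtain ⟨e, he, hwe⟩ := exists_mem_of_pos_mem_draw sdiff_subset hwK
      exact he.2 ⟨he.1, hwe⟩
    · exact hwS hwK
    · exact hx (E.pos_inj hxw)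
  obtain ⟨r, hr, hball⟩ := Metric.isOpen_iff.mp hK.isOpen_compl _ hwK
  have hFdraw : Disjoint F (E.draw G.edgeSet) := (disjoint_region _ q).mono_right subset_union_left
  obtain ⟨p, hp, hpF⟩ := mem_closure_iff.mp hcl _ isOpen_ball (mem_ball_self hr)
  have hpw : p ≠ E.pos w := fun h => disjoint_left.mp hFdraw hpF (h ▸ hw)
  have hsub : ball (E.pos w) r \ {E.pos w} ⊆ F := by
    refine subset_of_disjoint_frontier (isPreconnected_ball_sdiff_singleton one_lt_rank_plane _ hr)
      ⟨p, ⟨hp, hpw⟩, hpF⟩ (disjoint_left.mpr fun z hz hzF => ?_)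
    rcases hS.frontier_face_subset_of_forall_notMem_closure hcon hzF with hzw | hzK
    · exact hz.2 hzw
    · exact hball hz.1 hzK
  obtain ⟨e, he, hwe⟩ := exists_mem_of_pos_mem_draw subset_rfl hw
  obtain ⟨y, rfl⟩ := Sym2.mem_iff_exists.mp hwe
  have harc := isArc_edge (E := E) he
  obtain ⟨z, hz, hzedge, hzends⟩ := mem_closure_iff.mp
    (harc.subset_closure_sdiff_pair harc.left_mem) _ isOpen_ball (mem_ball_self hr)
  exact disjoint_left.mp hFdraw (hsub ⟨hz, fun h => hzends (.inl h)⟩) (edge_subset_draw he hzedge)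

lemma exists_isArc_subset_insert_face (hS : E.IsChord S u v) (hwS : E.pos w ∉ S)
    (hw : E.pos w ∈ E.draw G.edgeSet) (hq : q ∉ E.draw G.edgeSet ∪ S)
    (hcl : E.pos w ∈ closure (region (E.draw G.edgeSet ∪ S) q)) :
    ∃ A ⊆ insert (E.pos w) (region (E.draw G.edgeSet ∪ S) q), IsArc A q (E.pos w) := by
  obtain ⟨x, hwx, z, hz, hzcl⟩ := hS.exists_mem_edge_mem_closure_face hwS hw hcl
  have hedge := hS.edge_subset_closure_face hwx hz hzcl
  rw [← erase_union_edge hwx] at hedge hq ⊢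
  exact (isArc_edge hwx).exists_isArc_subset_region hS.isCompact_erase_union
    (hS.erase_inter_edge_subset hwx) hedge (mem_region_self hq)

end IsChord

lemma exists_isChord_subset_region [Finite V] (h : G.Adj u v) {K : Set Plane}
    (hK : E.edge u v ⊆ K) (hKG : K ⊆ E.draw G.edgeSet) (hx : x ∈ E.edge u v \ {E.pos u, E.pos v})
    (hcl : x ∈ closure (region K q)) :
    ∃ A, E.IsChord A u v ∧ A \ {E.pos u, E.pos v} ⊆ region K q ∧
      ∀ w ∉ s(u, v), ∀ w' ∉ s(u, v), E.pos w' ∈ region (E.edge u v ∪ A) (E.pos w) := by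
  have hdisj : Disjoint (E.pos '' {w | w ∉ s(u, v)}) (E.edge u v) := by
    rw [Set.disjoint_left, forall_mem_image]
    exact fun w hw hwe => hw (mem_of_pos_mem_edge h hwe)
  obtain ⟨W, hW, hWc, hWp, hWe⟩ :=
    (isArc_edge h).exists_isPreconnected_disjoint (toFinite _) hdisj
  set Y := E.draw (G.edgeSet \ {s(u, v)}) ∪ W
  have hY : IsCompact Y := (isCompact_draw sdiff_subset).union hWc
  have hYe : Y ∩ E.edge u v ⊆ {E.pos u, E.pos v} := by
    rw [union_inter_distrib_right, hWe.inter_eq, union_empty]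
    exact draw_sdiff_inter_edge_subset h
  have hGY : E.draw G.edgeSet ⊆ Y ∪ E.edge u v := by
    rw [← draw_sdiff_union_edge h]
    exact union_subset_union_left _ subset_union_left
  obtain ⟨p, ⟨hpK, hp⟩, hedge⟩ := (isArc_edge h).exists_subset_closure_region hY hYe hx hcl
    ((disjoint_region K q).mono_right hK)
  obtain ⟨A, hA, hAp⟩ := (isArc_edge h).exists_parallel hY hYe hedge hp
  have hAY : (A \ {E.pos u, E.pos v}) ∩ (Y ∪ E.edge u v) = ∅ :=
    ((disjoint_region _ p).mono_left hAp).inter_eq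
  refine ⟨A, ⟨hA, fun z hz => by_contra fun hends => ?_⟩, ?_, fun w hw w' hw' => ?_⟩
  · exact (hAY.subset ⟨⟨hz.1, hends⟩, hGY hz.2⟩).elim
  · exact hAp.trans ((region_anti (hKG.trans hGY) p).trans (region_eq hpK).subset)
  refine mem_region_of_isPreconnected hWp ?_ (hW (mem_image_of_mem _ hw))
    (hW (mem_image_of_mem _ hw'))
  refine disjoint_union_right.mpr ⟨hWe, Set.disjoint_left.mpr fun z hz hzA => ?_⟩
  have hze : z ∉ E.edge u v := Set.disjoint_left.mp hWe hz
  have hends : z ∉ ({E.pos u, E.pos v} : Set Plane) := fun h' =>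
    hze ((isArc_edge h).pair_subset h')
  exact (hAY.subset ⟨⟨hzA, hends⟩, .inl (.inr hz)⟩).elim

end Chords

section Counting

variable (E : PlaneEmbedding G)

/-- The number of vertices drawn in a region. -/
noncomputable def vertexCount (D : Set Plane) : ℕ := (E.pos ⁻¹' D).ncard

/-- The number of edges whose drawing meets a region. -/
noncomputable def edgeCount (D : Set Plane) : ℕ :=
  {e ∈ G.edgeSet | (E.draw {e} ∩ D).Nonempty}.ncard

/-- A region is heavy if it contains at least two thirds of the vertices. -/
def IsHeavy (D : Set Plane) : Prop := 2 * Nat.card V ≤ 3 * E.vertexCount D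

variable {E} {D D' D₁ D₂ D₃ K L : Set Plane} {u v w t : V} {p q : Plane}

lemma exists_pos_mem_of_vertexCount_pos (h : 0 < E.vertexCount D) : ∃ w, E.pos w ∈ D :=
  nonempty_of_ncard_ne_zero h.ne'

variable [Finite V]

lemma vertexCount_mono (h : D ⊆ D') : E.vertexCount D ≤ E.vertexCount D' :=
  ncard_le_ncard (preimage_mono h)

lemma vertexCount_lt_of_notMem (h : D ⊆ D') (hw' : E.pos w ∈ D') (hw : E.pos w ∉ D) :
    E.vertexCount D < E.vertexCount D' :=
  ncard_lt_ncard ⟨preimage_mono h, fun h' => hw (h' hw')⟩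

lemma vertexCount_le_card : E.vertexCount D ≤ Nat.card V :=
  ncard_le_card _

lemma vertexCount_lt_card (ht : E.pos t ∉ D) : E.vertexCount D < Nat.card V := by
  rw [← ncard_univ]
  exact ncard_lt_ncard ((ssubset_univ_iff).mpr ((ne_univ_iff_exists_notMem _).mpr ⟨t, ht⟩))

lemma vertexCount_union_add_inter :
    E.vertexCount (D ∪ D') + E.vertexCount (D ∩ D') = E.vertexCount D + E.vertexCount D' :=
  ncard_union_add_ncard_inter _ _

lemma edgeCount_lt_of_disjoint (h : D ⊆ D') (huv : G.Adj u v)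
    (hD' : (E.edge u v ∩ D').Nonempty) (hD : Disjoint (E.edge u v) D) :
    E.edgeCount D < E.edgeCount D' := by
  refine ncard_lt_ncard ⟨fun e he => ⟨he.1, he.2.mono (inter_subset_inter_right _ h)⟩, fun h' => ?_⟩
  have huv' : s(u, v) ∈ {e ∈ G.edgeSet | (E.draw {e} ∩ D').Nonempty} :=
    ⟨huv, (draw_singleton huv).symm ▸ hD'⟩
  have := (h' huv').2
  rw [draw_singleton huv, hD.inter_eq] at this
  exact this.ne_empty rfl

namespace IsHeavy

lemma exists_pos_mem_inter [Nonempty V] (h : E.IsHeavy D) (h' : E.IsHeavy D') :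
    ∃ w, E.pos w ∈ D ∩ D' := by
  apply exists_pos_mem_of_vertexCount_pos
  have hcard : 0 < Nat.card V := Nat.card_pos
  have hunion : E.vertexCount (D ∪ D') ≤ Nat.card V := vertexCount_le_card
  have hsum := vertexCount_union_add_inter (E := E) (D := D) (D' := D')
  unfold IsHeavy at h h'
  omega

lemma exists_pos_mem_inter_inter (h₁ : E.IsHeavy D₁) (h₂ : E.IsHeavy D₂) (h₃ : E.IsHeavy D₃)
    (ht₁ : E.pos t ∉ D₁) (ht₂ : E.pos t ∉ D₂) (ht₃ : E.pos t ∉ D₃) :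
    ∃ w, E.pos w ∈ D₁ ∩ D₂ ∩ D₃ := by
  apply exists_pos_mem_of_vertexCount_pos
  have h₁₂ : E.vertexCount (D₁ ∪ D₂) < Nat.card V := vertexCount_lt_card (not_or.mpr ⟨ht₁, ht₂⟩)
  have h₁₂₃ : E.vertexCount (D₁ ∩ D₂ ∪ D₃) < Nat.card V :=
    vertexCount_lt_card (not_or.mpr ⟨fun h => ht₁ h.1, ht₃⟩)
  have hsum := vertexCount_union_add_inter (E := E) (D := D₁) (D' := D₂)
  have hsum' := vertexCount_union_add_inter (E := E) (D := D₁ ∩ D₂) (D' := D₃)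
  unfold IsHeavy at h₁ h₂ h₃
  omega

lemma region_subset_region [Nonempty V] (h : E.IsHeavy (region K p))
    (h' : E.IsHeavy (region L q)) (hd : Disjoint (region L q) K) : region L q ⊆ region K p :=
  let ⟨_, hw, hw'⟩ := h.exists_pos_mem_inter h'
  subset_region (isPreconnected_region L q) hd hw' hw

/-- The three sides in question miss the common end `E.pos t` of the arcs, so they share a vertex
and the theta lemma applies at it. -/
lemma disjoint_of_theta {Q₁ Q₂ Q₃ : Set Plane} {m x₁ x₂ x₃ : Plane}
    (h₁ : IsArc Q₁ m (E.pos t)) (h₂ : IsArc Q₂ m (E.pos t)) (h₃ : IsArc Q₃ m (E.pos t))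
    (h₁₂ : Q₁ ∩ Q₂ ⊆ {m, E.pos t}) (h₁₃ : Q₁ ∩ Q₃ ⊆ {m, E.pos t})
    (h₂₃ : Q₂ ∩ Q₃ ⊆ {m, E.pos t}) (hx₁ : E.IsHeavy (region (Q₂ ∪ Q₃) x₁))
    (hx₂ : E.IsHeavy (region (Q₁ ∪ Q₃) x₂)) (hx₃ : E.IsHeavy (region (Q₁ ∪ Q₂) x₃)) :
    Disjoint (region (Q₂ ∪ Q₃) x₁) Q₁ ∨ Disjoint (region (Q₁ ∪ Q₃) x₂) Q₂ ∨
      Disjoint (region (Q₁ ∪ Q₂) x₃) Q₃ := by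
  by_contra! hcon
  have hend {Q Q' : Set Plane} {x : Plane} (h : IsArc Q m (E.pos t)) :
      Disjoint (region (Q ∪ Q') x) {m, E.pos t} :=
    (disjoint_region _ x).mono_right (h.pair_subset.trans subset_union_left)
  have ht {Q Q' : Set Plane} {x : Plane} (h : IsArc Q m (E.pos t)) :
      E.pos t ∉ region (Q ∪ Q') x := fun ht => disjoint_left.mp (hend h) ht (.inr rfl)
  obtain ⟨w, ⟨hw₁, hw₂⟩, hw₃⟩ := hx₁.exists_pos_mem_inter_inter hx₂ hx₃ (ht h₂) (ht h₁) (ht h₁)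
  obtain ⟨y₁, hy₁, hQ₁⟩ := not_disjoint_iff.mp hcon.1
  obtain ⟨y₂, hy₂, hQ₂⟩ := not_disjoint_iff.mp hcon.2.1
  obtain ⟨y₃, hy₃, hQ₃⟩ := not_disjoint_iff.mp hcon.2.2
  refine notMem_region_of_theta h₁ h₂ h₃ h₁₂ h₁₃ h₂₃ ⟨hQ₁, disjoint_left.mp (hend h₂) hy₁⟩
    ⟨hQ₂, disjoint_left.mp (hend h₁) hy₂⟩ ⟨hQ₃, disjoint_left.mp (hend h₁) hy₃⟩
    (p := E.pos w) ?_ ?_ ?_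
  · exact mem_region_trans (mem_region_symm hw₁) hy₁
  · exact mem_region_trans (mem_region_symm hw₂) hy₂
  · exact mem_region_trans (mem_region_symm hw₃) hy₃

end IsHeavy

end Counting

section HeavyCycles

/-- A leg from a point `m` off the drawing to the vertex `t`: an arc `A` from `m` to a vertex `a`
which does not cross the drawing, followed by the drawing of a tree path `P` between `t` and `a`.
Two legs with the same ends form a cycle of one chord and one tree path. -/
structure IsLeg (E : PlaneEmbedding G) (m : Plane) (A : Set Plane) {t a : V} (P : T.Walk t a) :
    Prop where
  isArc : IsArc A m (E.pos a)
  inter_draw_subset : A ∩ E.draw G.edgeSet ⊆ {E.pos a}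
  isPath : P.IsPath

namespace IsLeg

variable {E : PlaneEmbedding G} {m : Plane} {A B : Set Plane} {t a b : V} {P : T.Walk t a}
  {Q : T.Walk t b}

lemma isArc_union_draw (hle : T ≤ G) (h : E.IsLeg m A P) :
    IsArc (A ∪ E.draw P.edgeSet) m (E.pos t) := by
  rw [← Walk.edgeSet_reverse]
  exact isArc_union_draw_walk hle h.isPath.reverse h.isArc
    ((inter_subset_inter_right A (draw_walk_subset hle _)).trans h.inter_draw_subset)

lemma isChord_union (hA : E.IsLeg m A P) (hB : E.IsLeg m B Q) (hAB : A ∩ B ⊆ {m}) :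
    E.IsChord (A ∪ B) a b where
  isArc := hA.isArc.symm.union hB.isArc hAB
  inter_draw_subset := by
    rw [union_inter_distrib_right, insert_eq]
    exact union_subset_union hA.inter_draw_subset hB.inter_draw_subset

lemma inter_subset (hle : T ≤ G) (hA : E.IsLeg m A P) (hB : E.IsLeg m B Q) (hAB : A ∩ B ⊆ {m})
    (hPQ : MeetAtStart P Q) :
    (A ∪ E.draw P.edgeSet) ∩ (B ∪ E.draw Q.edgeSet) ⊆ {m, E.pos t} := by
  have hmeet {A : Set Plane} {a b : V} {P : T.Walk t a} {Q : T.Walk t b} (hA : E.IsLeg m A P)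
      (hPQ : MeetAtStart P Q) : A ∩ E.draw Q.edgeSet ⊆ {E.pos t} := by
    intro z hz
    obtain rfl := hA.inter_draw_subset ⟨hz.1, draw_walk_subset hle Q hz.2⟩
    rw [hPQ a P.end_mem_support (mem_support_of_pos_mem_draw hle hz.2)]
    rfl
  rintro z ⟨hzA | hzP, hzB | hzQ⟩
  · exact .inl (hAB ⟨hzA, hzB⟩)
  · exact .inr (hmeet hA hPQ ⟨hzA, hzQ⟩)
  · exact .inr (hmeet hB hPQ.symm ⟨hzB, hzP⟩)
  · exact .inr (hPQ.draw_inter_subset hle ⟨hzP, hzQ⟩)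

lemma union_union_draw_append :
    A ∪ B ∪ E.draw (P.reverse.append Q).edgeSet =
      A ∪ E.draw P.edgeSet ∪ (B ∪ E.draw Q.edgeSet) := by
  rw [Walk.edgeSet_append, Walk.edgeSet_reverse, draw_union, union_union_union_comm]

end IsLeg

lemma isLeg_and_inter_subset_singleton {E : PlaneEmbedding G} {S α : Set Plane} {m q : Plane}
    {w t : V} {P : T.Walk t w} (hwS : E.pos w ∉ S) (hmG : m ∉ E.draw G.edgeSet)
    (hP : P.IsPath) (hα : IsArc α m (E.pos w))
    (hαF : α \ {m, E.pos w} ⊆ region (E.draw G.edgeSet ∪ S) q) :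
    E.IsLeg m α P ∧ S ∩ α ⊆ {m} := by
  have hends : α ∩ (E.draw G.edgeSet ∪ S) ⊆ {m, E.pos w} := fun z hz =>
    by_contra fun h => notMem_of_mem_region (hαF ⟨hz.1, h⟩) hz.2
  refine ⟨⟨hα, fun z hz => (hends ⟨hz.1, .inl hz.2⟩).resolve_left ?_, hP⟩,
    fun z hz => (hends ⟨hz.2, .inr hz.1⟩).resolve_right ?_⟩
  · rintro rfl
    exact hmG hz.2
  · rintro rfl
    exact hwS hz.1

lemma IsChord.exists_isLeg {E : PlaneEmbedding G} {S : Set Plane} {m : Plane} {u v t : V}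
    {P : T.Walk t u} {Q : T.Walk t v} (hS : E.IsChord S u v) (hP : P.IsPath) (hQ : Q.IsPath)
    (hm : m ∈ S) (hmG : m ∉ E.draw G.edgeSet) (hu : E.pos u ∈ E.draw G.edgeSet)
    (hv : E.pos v ∈ E.draw G.edgeSet) :
    ∃ A B, E.IsLeg m A P ∧ E.IsLeg m B Q ∧ A ∪ B = S ∧ A ∩ B = {m} := by
  have hmu : m ≠ E.pos u := fun h => hmG (h ▸ hu)
  have hmv : m ≠ E.pos v := fun h => hmG (h ▸ hv)
  obtain ⟨A, B, hA, hB, rfl, hAB⟩ := hS.isArc.exists_split hm hmu hmv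
  have huB : E.pos u ∉ B := fun h => hmu (hAB.subset ⟨hA.left_mem, h⟩).symm
  have hvA : E.pos v ∉ A := fun h => hmv (hAB.subset ⟨h, hB.right_mem⟩).symm
  refine ⟨A, B, ⟨hA.symm, fun z hz => ?_, hP⟩, ⟨hB, fun z hz => ?_, hQ⟩, rfl, hAB⟩
  · refine (hS.inter_draw_subset ⟨.inl hz.1, hz.2⟩).resolve_right ?_
    rintro rfl
    exact hvA hz.1
  · refine (hS.inter_draw_subset ⟨.inr hz.1, hz.2⟩).resolve_left ?_
    rintro rfl
    exact huB hz.1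

/-- A closed curve consisting of a chord and the drawing of the tree path between its ends, with a
heavy side, recorded by a point `base`. -/
structure HeavyCycle (E : PlaneEmbedding G) (T : SimpleGraph V) where
  {u v : V}
  chord : Set Plane
  path : T.Walk u v
  base : Plane
  isChord : E.IsChord chord u v
  isPath : path.IsPath
  isHeavy : E.IsHeavy (region (chord ∪ E.draw path.edgeSet) base)

/-- Every cycle of a chord and a tree path has a heavy side: the hypothesis to be refuted. -/
def HasHeavySides (E : PlaneEmbedding G) (T : SimpleGraph V) : Prop :=
  ∀ ⦃u v : V⦄ ⦃S : Set Plane⦄ ⦃p : T.Walk u v⦄, E.IsChord S u v → p.IsPath →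
    ∃ z, E.IsHeavy (region (S ∪ E.draw p.edgeSet) z)

namespace HeavyCycle

variable {E : PlaneEmbedding G}

/-- The closed curve underlying a heavy cycle. -/
def curve (C : E.HeavyCycle T) : Set Plane := C.chord ∪ E.draw C.path.edgeSet

/-- The heavy side of a heavy cycle. -/
def side (C : E.HeavyCycle T) : Set Plane := region C.curve C.base

/-- The quantity minimized by the extremal heavy cycle. -/
noncomputable def measure (C : E.HeavyCycle T) : ℕ ×ₗ ℕ ×ₗ ℕ :=
  toLex (E.vertexCount C.side, toLex (C.path.length, E.edgeCount C.side))

variable {C C' : E.HeavyCycle T}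

lemma disjoint_side_curve : Disjoint C.side C.curve :=
  disjoint_region _ _

lemma isPreconnected_side : IsPreconnected C.side :=
  isPreconnected_region _ _

lemma face_subset_side (hle : T ≤ G) {q : Plane} (hq : q ∈ C.side) :
    region (E.draw G.edgeSet ∪ C.chord) q ⊆ C.side := by
  have hcurve : C.curve ⊆ E.draw G.edgeSet ∪ C.chord :=
    union_subset subset_union_right ((draw_walk_subset hle C.path).trans subset_union_left)
  exact (region_anti hcurve q).trans (region_eq hq).subset

variable [Finite V]

lemma isCompact_curve (hle : T ≤ G) : IsCompact C.curve :=
  C.isChord.isArc.isCompact.union (isCompact_draw (edgeSet_walk_subset hle C.path))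

lemma side_subset_of_disjoint [Nonempty V] (h : Disjoint C'.side C.curve) : C'.side ⊆ C.side :=
  C.isHeavy.region_subset_region C'.isHeavy h

lemma measure_lt_of_notMem {w : V} (h : C'.side ⊆ C.side) (hw : E.pos w ∈ C.side)
    (hw' : E.pos w ∉ C'.side) : C'.measure < C.measure :=
  Prod.Lex.toLex_lt_toLex.mpr (.inl (vertexCount_lt_of_notMem h hw hw'))

lemma measure_lt_of_length_lt (h : C'.side ⊆ C.side) (hlen : C'.path.length < C.path.length) :
    C'.measure < C.measure :=
  Prod.Lex.toLex_lt_toLex'.mpr ⟨vertexCount_mono h, fun _ =>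
    Prod.Lex.toLex_lt_toLex.mpr (.inl hlen)⟩

lemma measure_lt_of_edge {a b : V} (h : C'.side ⊆ C.side) (hlen : C'.path.length ≤ C.path.length)
    (hab : G.Adj a b) (hC : (E.edge a b ∩ C.side).Nonempty)
    (hC' : Disjoint (E.edge a b) C'.side) : C'.measure < C.measure :=
  Prod.Lex.toLex_lt_toLex'.mpr ⟨vertexCount_mono h, fun _ =>
    Prod.Lex.toLex_lt_toLex'.mpr ⟨hlen, fun _ => edgeCount_lt_of_disjoint h hab hC hC'⟩⟩

/-- If `w = t`, the new cycle is shorter; otherwise `w` has left the heavy side. -/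
lemma exists_measure_lt_of_isLeg [Nonempty V] {m z : Plane} {A B L : Set Plane} {t a w : V}
    {P : T.Walk t a} {Q : T.Walk t w} (hA : E.IsLeg m A P) (hB : E.IsLeg m B Q)
    (hAB : A ∩ B ⊆ {m}) (hPQ : MeetAtStart P Q)
    (hz : E.IsHeavy (region (A ∪ E.draw P.edgeSet ∪ (B ∪ E.draw Q.edgeSet)) z))
    (hcurve : C.curve ⊆ A ∪ E.draw P.edgeSet ∪ L)
    (hd : Disjoint (region (A ∪ E.draw P.edgeSet ∪ (B ∪ E.draw Q.edgeSet)) z) L)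
    (hlen : w = t → P.length < C.path.length) (hw : w ≠ t → E.pos w ∈ C.side) :
    ∃ C' : E.HeavyCycle T, C'.measure < C.measure := by
  have hdC := (((disjoint_region _ z).mono_right subset_union_left).union_right hd).mono_right
    hcurve
  rw [← IsLeg.union_union_draw_append] at hz hdC
  let C' : E.HeavyCycle T := ⟨A ∪ B, P.reverse.append Q, z, hA.isChord_union hB hAB,
    hPQ.isPath_append hA.isPath hB.isPath, hz⟩
  have hsub : C'.side ⊆ C.side := side_subset_of_disjoint hdC
  refine ⟨C', ?_⟩
  obtain rfl | hwt := eq_or_ne w t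
  · refine measure_lt_of_length_lt hsub ?_
    have hQ : Q.length = 0 := Walk.length_eq_zero_iff.mpr (Walk.isPath_iff_nil.mp hB.isPath)
    rw [Walk.length_append, Walk.length_reverse, hQ, add_zero]
    exact hlen rfl
  · exact measure_lt_of_notMem hsub (hw hwt) fun h =>
      disjoint_left.mp C'.disjoint_side_curve h (.inl (.inr hB.isArc.right_mem))

lemma pos_mem_side_of_subset_face (hle : T ≤ G) {w : V} {α : Set Plane} {m q : Plane}
    (hwp : w ∉ C.path.support) (hwS : E.pos w ∉ C.chord) (hα : IsArc α m (E.pos w))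
    (hq : q ∈ C.side) (hαF : α \ {m, E.pos w} ⊆ region (E.draw G.edgeSet ∪ C.chord) q) :
    E.pos w ∈ C.side :=
  mem_region_of_mem_closure (isCompact_curve hle).isClosed
    (closure_mono (hαF.trans (face_subset_side hle hq)) (hα.subset_closure_sdiff_pair hα.right_mem))
    (not_or.mpr ⟨hwS, fun h => hwp (mem_support_of_pos_mem_draw hle h)⟩)

lemma exists_measure_lt_of_spoke [Nonempty V] (hle : T ≤ G) (hT : T.IsTree)
    (hX : ∀ w, E.pos w ∈ E.draw G.edgeSet) (hH : E.HasHeavySides T) {w : V} {α : Set Plane}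
    {m q : Plane} (hw : w ∉ s(C.u, C.v)) (hm : m ∈ C.chord) (hmG : m ∉ E.draw G.edgeSet)
    (hα : IsArc α m (E.pos w)) (hq : q ∈ C.side)
    (hαF : α \ {m, E.pos w} ⊆ region (E.draw G.edgeSet ∪ C.chord) q) :
    ∃ C' : E.HeavyCycle T, C'.measure < C.measure := by
  obtain ⟨t, Pu, Pv, Pw, hPu, hPv, hPw, hpath, huv, huw, hvw⟩ := exists_median hT C.isPath w
  obtain ⟨A, B, hA, hB, hAB, hmeet⟩ := C.isChord.exists_isLeg hPu hPv hm hmG (hX _) (hX _)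
  have hwS : E.pos w ∉ C.chord := fun h => hw (C.isChord.mem_of_pos_mem (hX w) h)
  obtain ⟨hαleg, hαS⟩ := isLeg_and_inter_subset_singleton hwS hmG hPw hα hαF
  have hAα : A ∩ α ⊆ {m} :=
    (inter_subset_inter_left α (hAB ▸ subset_union_left)).trans hαS
  have hBα : B ∩ α ⊆ {m} :=
    (inter_subset_inter_left α (hAB ▸ subset_union_right)).trans hαS
  have hcurve : C.curve = A ∪ E.draw Pu.edgeSet ∪ (B ∪ E.draw Pv.edgeSet) := by
    rw [← IsLeg.union_union_draw_append, hAB, ← hpath, curve]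
  have hlen : C.path.length = Pu.length + Pv.length := by
    rw [hpath, Walk.length_append, Walk.length_reverse]
  have hwside (hwt : w ≠ t) : E.pos w ∈ C.side := by
    refine pos_mem_side_of_subset_face hle (fun h => ?_) hwS hα hq hαF
    rw [hpath, Walk.mem_support_append_iff, Walk.support_reverse, List.mem_reverse] at h
    exact hwt (h.elim (huw w · Pw.end_mem_support) (hvw w · Pw.end_mem_support))
  have hside : E.IsHeavy (region (A ∪ E.draw Pu.edgeSet ∪ (B ∪ E.draw Pv.edgeSet)) C.base) := by
    rw [← hcurve]
    exact C.isHeavy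
  obtain ⟨z₁, hz₁⟩ := hH (hB.isChord_union hαleg hBα) (hvw.isPath_append hPv hPw)
  obtain ⟨z₂, hz₂⟩ := hH (hA.isChord_union hαleg hAα) (huw.isPath_append hPu hPw)
  rw [IsLeg.union_union_draw_append] at hz₁ hz₂
  rcases IsHeavy.disjoint_of_theta (hA.isArc_union_draw hle) (hB.isArc_union_draw hle)
    (hαleg.isArc_union_draw hle) (hA.inter_subset hle hB hmeet.subset huv)
    (hA.inter_subset hle hαleg hAα huw) (hB.inter_subset hle hαleg hBα hvw) hz₁ hz₂
    hside with hd | hd | hd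
  · refine exists_measure_lt_of_isLeg hB hαleg hBα hvw hz₁ (hcurve.trans (union_comm _ _)).subset hd
      ?_ hwside
    rintro rfl
    exact hlen ▸ Nat.lt_add_of_pos_left
      (Walk.not_nil_iff_lt_length.mp (Walk.not_nil_of_ne fun h => hw (h ▸ Sym2.mem_mk_left _ _)))
  · refine exists_measure_lt_of_isLeg hA hαleg hAα huw hz₂ hcurve.subset hd ?_ hwside
    rintro rfl
    exact hlen ▸ Nat.lt_add_of_pos_right
      (Walk.not_nil_iff_lt_length.mp (Walk.not_nil_of_ne fun h => hw (h ▸ Sym2.mem_mk_right _ _)))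
  · obtain ⟨x, hx⟩ := hα.isPathConnected_sdiff_pair.nonempty
    have hxD := face_subset_side hle hq (hαF hx)
    rw [side, hcurve] at hxD
    exact absurd (.inl hx.1) (disjoint_left.mp hd hxD)

end HeavyCycle

end HeavyCycles

section Edges

variable {E : PlaneEmbedding G} {u v w : V} {p : T.Walk u v}

lemma exists_pos_mem_draw_of_not_adj (hle : T ≤ G) (huv : u ≠ v) (hT : ¬ T.Adj u v) :
    ∃ w ∉ s(u, v), E.pos w ∈ E.draw p.edgeSet := by
  cases p with
  | nil => exact absurd rfl huv
  | @cons _ b _ h p =>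
    refine ⟨b, fun hb => ?_, draw_cons hle h p ▸ .inl (isArc_edge (hle h)).right_mem⟩
    obtain rfl | rfl := Sym2.mem_iff.mp hb
    exacts [h.ne rfl, hT h]

lemma edge_inter_draw_walk_subset (hle : T ≤ G) (hG : G.Adj u v) (hT : ¬ T.Adj u v) :
    E.edge u v ∩ E.draw p.edgeSet ⊆ {E.pos u, E.pos v} := by
  have hp : p.edgeSet ⊆ G.edgeSet \ {s(u, v)} :=
    subset_sdiff_singleton (edgeSet_walk_subset hle p) fun h => hT (p.adj_of_mem_edges h)
  rw [inter_comm]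
  exact (inter_subset_inter_left _ (draw_mono hp)).trans (draw_sdiff_inter_edge_subset hG)

lemma draw_walk_eq_edge (hle : T ≤ G) (hT : T.IsAcyclic) (hp : p.IsPath) (h : T.Adj u v) :
    E.draw p.edgeSet = E.edge u v := by
  have hpath : p = h.toWalk :=
    congrArg Subtype.val ((hT.subsingleton_path u v).elim ⟨p, hp⟩ (Path.singleton h))
  rw [hpath, draw_cons hle h, Walk.edgeSet_nil, draw_empty, union_empty]

namespace IsChord

variable {S : Set Plane} {q : Plane}

lemma inter_edge_subset (hS : E.IsChord S u v) {a b : V} (hab : G.Adj a b) :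
    S ∩ E.edge a b ⊆ {E.pos u, E.pos v} :=
  (inter_subset_inter_right S (edge_subset_draw hab)).trans hS.inter_draw_subset

lemma inter_draw_walk_subset (hS : E.IsChord S u v) (hle : T ≤ G) (p : T.Walk u v) :
    S ∩ E.draw p.edgeSet ⊆ {E.pos u, E.pos v} :=
  (inter_subset_inter_right S (draw_walk_subset hle p)).trans hS.inter_draw_subset

variable [Finite V]

lemma edge_subset_closure_face_of_mem_frontier (hS : E.IsChord S u v)
    (hcl : ∀ w ∉ s(u, v), E.pos w ∉ closure (region (E.draw G.edgeSet ∪ S) q)) {x : Plane}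
    (hx : x ∈ frontier (region (E.draw G.edgeSet ∪ S) q)) (hxS : x ∉ S) :
    G.Adj u v ∧ x ∈ E.edge u v ∧ E.edge u v ⊆ closure (region (E.draw G.edgeSet ∪ S) q) := by
  have hxF := frontier_subset_closure hx
  have hxG : x ∈ E.draw G.edgeSet :=
    (frontier_region_subset hS.isCompact_draw_union.isClosed q hx).resolve_right hxS
  have huv (c : V) (hc : E.pos c ∈ closure (region (E.draw G.edgeSet ∪ S) q)) : c ∈ s(u, v) :=
    by_contra fun h => hcl c h hc
  have hne (c : V) : x ≠ E.pos c := by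
    rintro rfl
    exact hxS (hS.isArc.pair_subset (pos_mem_pair_iff.mpr (huv c hxF)))
  obtain ⟨a, b, hab, hxab⟩ := mem_draw.mp hxG
  have hedge := hS.edge_subset_closure_face hab ⟨hxab, not_or.mpr ⟨hne a, hne b⟩⟩ hxF
  have heq : s(u, v) = s(a, b) := (Sym2.mem_and_mem_iff hab.ne).mp
    ⟨huv a (hedge (isArc_edge hab).left_mem), huv b (hedge (isArc_edge hab).right_mem)⟩
  rw [edge_congr hab heq]
  exact ⟨G.mem_edgeSet.mp (heq ▸ hab), hxab, hedge⟩

end IsChord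

namespace HeavyCycle

variable {C : E.HeavyCycle T} {q : Plane}

lemma inter_subset (hle : T ≤ G) :
    C.chord ∩ E.draw C.path.edgeSet ⊆ {E.pos C.u, E.pos C.v} :=
  C.isChord.inter_draw_walk_subset hle C.path

lemma isArc_path (hle : T ≤ G) : IsArc (E.draw C.path.edgeSet) (E.pos C.u) (E.pos C.v) :=
  isArc_draw_walk hle C.isPath C.isChord.ne

lemma notMem_ends_of_pos_mem_side (hw : E.pos w ∈ C.side) : w ∉ s(C.u, C.v) := fun h =>
  disjoint_left.mp C.disjoint_side_curve hw
    (.inl (C.isChord.isArc.pair_subset (pos_mem_pair_iff.mpr h)))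

lemma pos_mem_region_edge_union_chord (hX : ∀ w, E.pos w ∈ E.draw G.edgeSet)
    (hG : G.Adj C.u C.v) (hq : q ∉ E.draw G.edgeSet ∪ C.chord)
    (hF : frontier (region (E.draw G.edgeSet ∪ C.chord) q) ⊆ E.edge C.u C.v ∪ C.chord) {w w' : V}
    (hw : w ∉ s(C.u, C.v)) (hw' : w' ∉ s(C.u, C.v)) :
    E.pos w' ∈ region (E.edge C.u C.v ∪ C.chord) (E.pos w) := by
  have hnotMem {w : V} (hw : w ∉ s(C.u, C.v)) : E.pos w ∉ E.edge C.u C.v ∪ C.chord :=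
    not_or.mpr ⟨fun h => hw (mem_of_pos_mem_edge hG h),
      fun h => hw (C.isChord.mem_of_pos_mem (hX w) h)⟩
  have hface (w : V) : E.pos w ∉ region (E.edge C.u C.v ∪ C.chord) q := fun h =>
    notMem_of_mem_region (region_subset_of_frontier_subset (mem_region_self hq) hF h) (.inl (hX w))
  refine (isArc_edge hG).mem_region_union_of_notMem C.isChord.isArc ?_ ?_ (hnotMem hw)
    (hnotMem hw') (hface w) (hface w')
  · rw [inter_comm]
    exact C.isChord.inter_edge_subset hG
  · exact fun h => hq (h.imp_left fun h => edge_subset_draw hG h)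

lemma disjoint_region_edge_union_path_chord (hle : T ≤ G) (hG : G.Adj C.u C.v)
    (hT : ¬ T.Adj C.u C.v) (he : E.edge C.u C.v \ {E.pos C.u, E.pos C.v} ⊆ C.side)
    (hsep : ∀ w ∉ s(C.u, C.v), ∀ w' ∉ s(C.u, C.v),
      E.pos w' ∈ region (E.edge C.u C.v ∪ C.chord) (E.pos w)) (hw : E.pos w ∈ C.side) :
    Disjoint (region (E.edge C.u C.v ∪ E.draw C.path.edgeSet) (E.pos w)) C.chord := by
  refine disjoint_left.mpr fun x hx hxS => ?_
  have hends : x ∉ ({E.pos C.u, E.pos C.v} : Set Plane) := fun h =>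
    notMem_of_mem_region hx (.inl ((isArc_edge hG).pair_subset h))
  obtain ⟨y, hy⟩ := (isArc_edge hG).isPathConnected_sdiff_pair.nonempty
  obtain ⟨w', hw', hwP⟩ := exists_pos_mem_draw_of_not_adj (E := E) (p := C.path) hle C.isChord.ne hT
  refine notMem_region_of_theta (isArc_edge hG) C.isChord.isArc (isArc_path hle) ?_
    (edge_inter_draw_walk_subset hle hG hT) (inter_subset hle) hy ⟨hxS, hends⟩
    ⟨hwP, fun h => hw' (pos_mem_pair_iff.mp h)⟩
    (mem_region_trans (mem_region_symm hw) (he hy)) hx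
    (hsep w (notMem_ends_of_pos_mem_side hw) w' hw')
  rw [inter_comm]
  exact C.isChord.inter_edge_subset hG

lemma pos_mem_region_edge_union_path (hle : T ≤ G)
    (hG : G.Adj C.u C.v) (hT : ¬ T.Adj C.u C.v)
    (hd : ∀ w, E.pos w ∈ C.side →
      Disjoint (region (E.edge C.u C.v ∪ E.draw C.path.edgeSet) (E.pos w)) C.chord) {w w' : V}
    (hw : E.pos w ∈ C.side) (hw' : E.pos w' ∈ C.side) :
    E.pos w' ∈ region (E.edge C.u C.v ∪ E.draw C.path.edgeSet) (E.pos w) := by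
  obtain ⟨x, hxS, hx⟩ := C.isChord.isArc.isPathConnected_sdiff_pair.nonempty
  have hnotMem {w : V} (hw : E.pos w ∈ C.side) :
      E.pos w ∉ E.edge C.u C.v ∪ E.draw C.path.edgeSet :=
    not_or.mpr ⟨fun h => notMem_ends_of_pos_mem_side hw (mem_of_pos_mem_edge hG h),
      fun h => disjoint_left.mp C.disjoint_side_curve hw (.inr h)⟩
  refine (isArc_edge hG).mem_region_union_of_notMem (isArc_path hle)
    (edge_inter_draw_walk_subset hle hG hT) ?_ (hnotMem hw) (hnotMem hw')
    (fun h => disjoint_left.mp (hd w hw) (mem_region_symm h) hxS)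
    (fun h => disjoint_left.mp (hd w' hw') (mem_region_symm h) hxS)
  exact not_or.mpr ⟨fun h => hx (C.isChord.inter_edge_subset hG ⟨hxS, h⟩),
    fun h => hx (inter_subset hle ⟨hxS, h⟩)⟩

lemma disjoint_region_chord_union_path_edge (hle : T ≤ G) (hG : G.Adj C.u C.v)
    (hT : ¬ T.Adj C.u C.v) {A : Set Plane} (hA : E.IsChord A C.u C.v) {z : Plane}
    (hw : E.pos w ∈ C.side) (hz : E.pos w ∈ region (A ∪ E.draw C.path.edgeSet) z)
    (hAw : A \ {E.pos C.u, E.pos C.v} ⊆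
      region (E.edge C.u C.v ∪ E.draw C.path.edgeSet) (E.pos w))
    (hsep : ∀ w ∉ s(C.u, C.v), ∀ w' ∉ s(C.u, C.v),
      E.pos w' ∈ region (E.edge C.u C.v ∪ A) (E.pos w)) :
    Disjoint (E.edge C.u C.v) (region (A ∪ E.draw C.path.edgeSet) z) := by
  refine disjoint_left.mpr fun x hxe hx => ?_
  have hends : x ∉ ({E.pos C.u, E.pos C.v} : Set Plane) := fun h =>
    notMem_of_mem_region hx (.inl (hA.isArc.pair_subset h))
  obtain ⟨y, hy⟩ := hA.isArc.isPathConnected_sdiff_pair.nonempty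
  obtain ⟨w', hw', hwP⟩ := exists_pos_mem_draw_of_not_adj (E := E) (p := C.path) hle C.isChord.ne hT
  refine notMem_region_of_theta (isArc_edge hG) hA.isArc (isArc_path hle) ?_
    (edge_inter_draw_walk_subset hle hG hT) (hA.inter_draw_walk_subset hle C.path) ⟨hxe, hends⟩ hy
    ⟨hwP, fun h => hw' (pos_mem_pair_iff.mp h)⟩ (mem_region_trans (mem_region_symm hz) hx)
    (hAw hy) (hsep w (notMem_ends_of_pos_mem_side hw) w' hw')
  rw [inter_comm]
  exact hA.inter_edge_subset hG

variable [Finite V]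

lemma exists_pos_mem_side [Nonempty V] : ∃ w, E.pos w ∈ C.side :=
  let ⟨w, hw, _⟩ := C.isHeavy.exists_pos_mem_inter C.isHeavy
  ⟨w, hw⟩

lemma base_notMem_curve [Nonempty V] : C.base ∉ C.curve :=
  let ⟨_, hw⟩ := C.exists_pos_mem_side
  base_notMem_of_mem_region hw

lemma edge_sdiff_subset_side (hle : T ≤ G) (hG : G.Adj C.u C.v) (hT : ¬ T.Adj C.u C.v)
    (hq : q ∈ C.side)
    (hcl : E.edge C.u C.v ⊆ closure (region (E.draw G.edgeSet ∪ C.chord) q)) :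
    E.edge C.u C.v \ {E.pos C.u, E.pos C.v} ⊆ C.side := fun x hx => by
  refine mem_region_of_mem_closure (isCompact_curve hle).isClosed
    (closure_mono (face_subset_side hle hq) (hcl hx.1)) (not_or.mpr ⟨fun h => ?_, fun h => ?_⟩)
  · exact hx.2 (C.isChord.inter_edge_subset hG ⟨h, hx.1⟩)
  · exact hx.2 (edge_inter_draw_walk_subset hle hG hT ⟨hx.1, h⟩)

lemma exists_measure_lt_of_not_adj [Nonempty V] (hle : T ≤ G)
    (hX : ∀ w, E.pos w ∈ E.draw G.edgeSet) (hH : E.HasHeavySides T) (hG : G.Adj C.u C.v)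
    (hT : ¬ T.Adj C.u C.v) (hq : q ∈ C.side) (hqG : q ∉ E.draw G.edgeSet ∪ C.chord)
    (hcl : E.edge C.u C.v ⊆ closure (region (E.draw G.edgeSet ∪ C.chord) q))
    (hF : frontier (region (E.draw G.edgeSet ∪ C.chord) q) ⊆ E.edge C.u C.v ∪ C.chord) :
    ∃ C' : E.HeavyCycle T, C'.measure < C.measure := by
  have he := edge_sdiff_subset_side hle hG hT hq hcl
  have hd (w : V) (hw : E.pos w ∈ C.side) :=
    disjoint_region_edge_union_path_chord hle hG hT he
      (fun _ hw _ => pos_mem_region_edge_union_chord hX hG hqG hF hw) hw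
  set K := E.edge C.u C.v ∪ E.draw C.path.edgeSet
  obtain ⟨w, hw⟩ := C.exists_pos_mem_side
  have hwK : E.pos w ∉ K :=
    base_notMem_of_mem_region (pos_mem_region_edge_union_path hle hG hT hd hw hw)
  have hKside : region K (E.pos w) ⊆ C.side :=
    subset_region (isPreconnected_region _ _) (disjoint_union_right.mpr
      ⟨hd w hw, (disjoint_region _ _).mono_right subset_union_right⟩) (mem_region_self hwK) hw
  obtain ⟨x, hx⟩ := (isArc_edge (E := E) hG).isPathConnected_sdiff_pair.nonempty
  obtain ⟨A, hA, hAK, hsep⟩ := exists_isChord_subset_region hG (K := K) subset_union_left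
    (union_subset (edge_subset_draw hG) (draw_walk_subset hle C.path)) hx
    ((isArc_edge hG).mem_closure_region_union (isArc_path hle)
      (edge_inter_draw_walk_subset hle hG hT) hx.1 (fun h => hx.2 (.inl h))
      (fun h => hx.2 (.inr h)) hwK)
  obtain ⟨z, hz⟩ := hH hA C.isPath
  let C' : E.HeavyCycle T := ⟨A, C.path, z, hA, C.isPath, hz⟩
  obtain ⟨y, hy, hyz⟩ := C.isHeavy.exists_pos_mem_inter hz
  have hyK : E.pos y ∈ region K (E.pos w) :=
    pos_mem_region_edge_union_path hle hG hT hd hw hy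
  have hdisj : Disjoint (E.edge C.u C.v) C'.side :=
    disjoint_region_chord_union_path_edge hle hG hT hA hy hyz (hAK.trans (region_eq hyK).superset)
      hsep
  have hsub : C'.side ⊆ region K (E.pos w) :=
    subset_region C'.isPreconnected_side (disjoint_union_right.mpr
      ⟨hdisj.symm, C'.disjoint_side_curve.mono_right subset_union_right⟩) hyz hyK
  exact ⟨C', measure_lt_of_edge (hsub.trans hKside) le_rfl hG ⟨x, hx.1, he hx⟩ hdisj⟩

end HeavyCycle

end Edges

section Minimality

variable {E : PlaneEmbedding G}

namespace HeavyCycle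

variable {C : E.HeavyCycle T} {w : V} {q : Plane}

variable [Finite V] [Nonempty V]

lemma exists_isArc_subset_face (hle : T ≤ G) :
    ∃ m ∈ C.chord \ E.draw G.edgeSet, ∃ q ∈ C.side \ (E.draw G.edgeSet ∪ C.chord),
      ∃ B, IsArc B q m ∧ B \ {m} ⊆ region (E.draw G.edgeSet ∪ C.chord) q := by
  have hclosed : IsClosed (E.draw G.edgeSet) := (isCompact_draw subset_rfl).isClosed
  obtain ⟨y, hy, hends⟩ := C.isChord.isArc.isPathConnected_sdiff_pair.nonempty
  have hcl : y ∈ closure C.side := C.isChord.isArc.mem_closure_region_union (isArc_path hle)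
    (inter_subset hle) hy (fun h => hends (.inl h)) (fun h => hends (.inr h)) C.base_notMem_curve
  obtain ⟨m, ⟨hmC, hmG⟩, q, hq, B, hBG, hB, hBside⟩ :=
    exists_isArc_sdiff_subset_region (isCompact_curve hle).isClosed (.inl hy) hcl
      (hclosed.isOpen_compl.mem_nhds fun h => hends (C.isChord.inter_draw_subset ⟨hy, h⟩))
  have hm : m ∈ C.chord := hmC.resolve_right fun h => hmG (draw_walk_subset hle _ h)
  have hBS : Disjoint (B \ {m}) (E.draw G.edgeSet ∪ C.chord) := disjoint_union_right.mpr
    ⟨(disjoint_left.mpr fun _ h => hBG h).mono_left sdiff_subset,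
      (C.disjoint_side_curve.mono_right subset_union_left).mono_left hBside⟩
  have hqB : q ∈ B \ {m} := ⟨hB.left_mem, hB.ne⟩
  have hqS := disjoint_left.mp hBS hqB
  exact ⟨m, ⟨hm, hmG⟩, q, ⟨hq, hqS⟩, B, hB, subset_region
    hB.symm.isPathConnected_sdiff_left.isConnected.isPreconnected hBS hqB (mem_region_self hqS)⟩

lemma exists_measure_lt_of_mem_closure_face (hle : T ≤ G) (hT : T.IsTree)
    (hX : ∀ w, E.pos w ∈ E.draw G.edgeSet) (hH : E.HasHeavySides T) {m : Plane} {B : Set Plane}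
    (hm : m ∈ C.chord \ E.draw G.edgeSet) (hq : q ∈ C.side \ (E.draw G.edgeSet ∪ C.chord))
    (hB : IsArc B q m) (hBF : B \ {m} ⊆ region (E.draw G.edgeSet ∪ C.chord) q)
    (hw : w ∉ s(C.u, C.v)) (hcl : E.pos w ∈ closure (region (E.draw G.edgeSet ∪ C.chord) q)) :
    ∃ C' : E.HeavyCycle T, C'.measure < C.measure := by
  obtain ⟨A, hAF, hA⟩ := C.isChord.exists_isArc_subset_insert_face
    (fun h => hw (C.isChord.mem_of_pos_mem (hX w) h)) (hX w) hq.2 hcl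
  obtain ⟨α, hα, harc⟩ := hB.symm.exists_subset_union hA fun h => hm.2 (h ▸ hX w)
  refine exists_measure_lt_of_spoke hle hT hX hH hw hm.1 hm.2 harc hq.1 fun z hz => ?_
  rcases hα hz.1 with hzB | hzA
  · exact hBF ⟨hzB, fun h => hz.2 (.inl h)⟩
  · exact (hAF hzA).resolve_left fun h => hz.2 (.inr h)

lemma exists_measure_lt (hle : T ≤ G) (hT : T.IsTree) (hX : ∀ w, E.pos w ∈ E.draw G.edgeSet)
    (hH : E.HasHeavySides T) (C : E.HeavyCycle T) :
    ∃ C' : E.HeavyCycle T, C'.measure < C.measure := by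
  obtain ⟨m, hm, q, hq, B, hB, hBF⟩ := C.exists_isArc_subset_face hle
  by_cases! hcl : ∃ w ∉ s(C.u, C.v), E.pos w ∈ closure (region (E.draw G.edgeSet ∪ C.chord) q)
  · obtain ⟨w, hw, hwcl⟩ := hcl
    exact exists_measure_lt_of_mem_closure_face hle hT hX hH hm hq hB hBF hw hwcl
  have hqF : q ∈ region (E.draw G.edgeSet ∪ C.chord) q := mem_region_self hq.2
  have hface {K : Set Plane} {z : Plane} (hz : z ∈ E.draw G.edgeSet) (hzK : z ∈ region K q) :
      ¬ frontier (region (E.draw G.edgeSet ∪ C.chord) q) ⊆ K := fun h =>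
    notMem_of_mem_region (region_subset_of_frontier_subset hqF h hzK) (.inl hz)
  have hchord : ¬ frontier (region (E.draw G.edgeSet ∪ C.chord) q) ⊆ C.chord := by
    obtain ⟨x, hx, hends⟩ := (C.isArc_path hle).isPathConnected_sdiff_pair.nonempty
    exact hface (draw_walk_subset hle _ hx) (C.isChord.isArc.mem_region (fun h => hq.2 (.inr h))
      fun h => hends (inter_subset hle ⟨h, hx⟩))
  obtain ⟨x, hx, hxS⟩ := not_subset.mp hchord
  obtain ⟨hG, -, hedge⟩ := C.isChord.edge_subset_closure_face_of_mem_frontier hcl hx hxS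
  have hF : frontier (region (E.draw G.edgeSet ∪ C.chord) q) ⊆ E.edge C.u C.v ∪ C.chord :=
    fun z hz => or_iff_not_imp_right.mpr fun hzS =>
      (C.isChord.edge_subset_closure_face_of_mem_frontier hcl hz hzS).2.1
  refine exists_measure_lt_of_not_adj hle hX hH hG (fun hadj => ?_) hq.1 hq.2 hedge hF
  rw [← draw_walk_eq_edge hle hT.isAcyclic C.isPath hadj] at hF
  obtain ⟨w, hw⟩ := C.exists_pos_mem_side
  exact hface (hX w) (mem_region_trans (mem_region_symm hq.1) hw) (hF.trans (union_comm _ _).subset)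

end HeavyCycle

lemma pos_mem_draw_edgeSet [Nontrivial V] (hG : G.Connected) (w : V) :
    E.pos w ∈ E.draw G.edgeSet := by
  obtain ⟨x, hx⟩ := hG.preconnected.exists_adj_of_nontrivial w
  exact edge_subset_draw hx (isArc_edge hx).left_mem

lemma HasHeavySides.nonempty_heavyCycle [Finite V] (hH : E.HasHeavySides T) (hle : T ≤ G)
    {u v : V} (h : T.Adj u v) : Nonempty (E.HeavyCycle T) := by
  have harc := isArc_edge (E := E) (hle h)
  obtain ⟨x, hx, hends⟩ := harc.isPathConnected_sdiff_pair.nonempty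
  obtain ⟨q, hq⟩ := (ne_univ_iff_exists_notMem _).mp harc.isCompact.ne_univ
  obtain ⟨S, hS, -⟩ := exists_isChord_subset_region (hle h) Subset.rfl (edge_subset_draw (hle h))
    ⟨hx, hends⟩ (harc.mem_closure_region hx (fun h => hends (.inl h)) (fun h => hends (.inr h)) hq)
  have hp : h.toWalk.IsPath := Walk.IsPath.of_adj h
  obtain ⟨z, hz⟩ := hH hS hp
  exact ⟨⟨S, h.toWalk, z, hS, hp, hz⟩⟩

lemma not_hasHeavySides [Finite V] [Nontrivial V] (hle : T ≤ G) (hT : T.IsTree) :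
    ¬ E.HasHeavySides T := fun hH => by
  obtain ⟨u⟩ : Nonempty V := inferInstance
  obtain ⟨v, huv⟩ := hT.connected.preconnected.exists_adj_of_nontrivial u
  have := hH.nonempty_heavyCycle hle huv
  obtain ⟨C, hC⟩ := exists_minimalFor_of_wellFoundedLT (fun _ : E.HeavyCycle T => True)
    HeavyCycle.measure ⟨this.some, trivial⟩
  obtain ⟨C', hlt⟩ := HeavyCycle.exists_measure_lt hle hT
    (pos_mem_draw_edgeSet (hT.connected.mono hle)) hH C
  exact hC.not_prop_of_lt hlt trivial

lemma exists_isChord_forall_not_isHeavy [Finite V] [Nontrivial V] (hle : T ≤ G) (hT : T.IsTree) :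
    ∃ (u v : V) (S : Set Plane) (p : T.Walk u v), E.IsChord S u v ∧ p.IsPath ∧
      ∀ z, ¬ E.IsHeavy (region (S ∪ E.draw p.edgeSet) z) := by
  by_contra! h
  exact not_hasHeavySides hle hT fun u v S p => h u v S p

lemma IsChord.exists_continuous_param {u v : V} {S : Set Plane} (hS : E.IsChord S u v) :
    ∃ γ : ℝ → Plane, Continuous γ ∧ InjOn γ (Icc 0 1) ∧ γ 0 = E.pos u ∧ γ 1 = E.pos v ∧
      γ '' Icc 0 1 = S ∧ Disjoint (γ '' Ioo 0 1) (E.draw G.edgeSet) := by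
  obtain ⟨γ, hγ, hinj, h0, h1, rfl⟩ := hS.isArc.exists_continuous_param zero_lt_one
  refine ⟨γ, hγ, hinj, h0, h1, rfl, ?_⟩
  rw [← Icc_sdiff_both, hinj.image_sdiff_subset (by simp [pair_subset_iff]), image_pair, h0, h1]
  exact disjoint_left.mpr fun z hz hzG => hz.2 (hS.inter_draw_subset ⟨hz.1, hzG⟩)

lemma IsChord.exists_closed_param (hle : T ≤ G) {u v : V} {S : Set Plane} {p : T.Walk u v}
    (hS : E.IsChord S u v) (hp : p.IsPath) :
    ∃ γ : ℝ → Plane, Continuous γ ∧ InjOn γ (Ico 0 1) ∧ γ 0 = γ 1 ∧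
      γ '' Icc 0 1 = S ∪ E.draw p.edgeSet :=
  hS.isArc.exists_closed_param_union (isArc_draw_walk hle hp hS.ne)
    (hS.inter_draw_walk_subset hle p)

lemma card_lt_of_not_isHeavy {D : Set Plane} (h : ¬ E.IsHeavy D) :
    (Nat.card {w : V | E.pos w ∈ D} : ℝ) < 2 / 3 * Nat.card V := by
  have hcast : (3 * (E.pos ⁻¹' D).ncard : ℝ) < 2 * Nat.card V := by
    exact_mod_cast not_le.mp h
  rw [← Nat.card_coe_set_eq] at hcast
  change (Nat.card (E.pos ⁻¹' D) : ℝ) < _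
  linarith

end Minimality

end PlaneEmbedding

/-- Lemma 2.1 (Lipton–Tarjan): for any plane graph `G` on `n ≥ 2` vertices and any
spanning tree `T` of `G`, there are vertices `u, v` and a simple arc `a` from `u` to `v`
not crossing any edge of `G`, such that the closed curve `C` consisting of `a` together
with the (drawn) unique `u`–`v` path of `T` is a Jordan curve each of whose complementary
regions contains fewer than `(2/3)n` vertices of `G`. -/
theorem planar_separator_lemma {V : Type} [Fintype V] (G : SimpleGraph V)
    (E : PlaneEmbedding G) (hn : 2 ≤ Fintype.card V)
    (T : SimpleGraph V) (hle : T ≤ G) (hT : T.IsTree) :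
    ∃ (u v : V) (a : ℝ → ℝ × ℝ),
      Continuous a ∧ Set.InjOn a (Set.Icc 0 1) ∧
      a 0 = E.pos u ∧ a 1 = E.pos v ∧
      -- the arc does not cross any edge of `G` …
      (∀ ⦃x y⦄, G.Adj x y →
        Disjoint (a '' Set.Ioo 0 1) (E.arc x y '' Set.Icc 0 1)) ∧
      -- … nor does it pass through any vertex of `G`
      (∀ w : V, E.pos w ∉ a '' Set.Ioo 0 1) ∧
      ∃ p : T.Walk u v, p.IsPath ∧
        -- `C` is the union of the arc and the drawn edges of the `T`-path from `u` to `v`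
        ∀ C : Set (ℝ × ℝ),
          C = a '' Set.Icc 0 1 ∪
              ⋃ (x : V) (y : V) (_ : s(x, y) ∈ p.edges), E.arc x y '' Set.Icc 0 1 →
          -- `C` is a Jordan curve
          (∃ γ : ℝ → ℝ × ℝ, Continuous γ ∧ Set.InjOn γ (Set.Ico 0 1) ∧
            γ 0 = γ 1 ∧ γ '' Set.Icc 0 1 = C) ∧
          -- every region of the complement of `C` contains fewer than `(2/3)n` vertices
          ∀ z : ℝ × ℝ, z ∉ C →
            (Nat.card {w : V | E.pos w ∈ connectedComponentIn Cᶜ z} : ℝ) <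
              2 / 3 * Fintype.card V := by
  have : Nontrivial V := Fintype.one_lt_card_iff_nontrivial.mp hn
  obtain ⟨u, v, S, p, hS, hp, hlight⟩ := E.exists_isChord_forall_not_isHeavy hle hT
  obtain ⟨a, ha, hinj, h0, h1, himage, hdisj⟩ := hS.exists_continuous_param
  refine ⟨u, v, a, ha, hinj, h0, h1, fun x y hxy => ?_, fun w hw => ?_, p, hp, fun C hC => ?_⟩
  · exact hdisj.mono_right (PlaneEmbedding.edge_subset_draw hxy)
  · exact Set.disjoint_left.mp hdisj hw
      (PlaneEmbedding.pos_mem_draw_edgeSet (hT.connected.mono hle) w)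
  obtain rfl : C = S ∪ E.draw p.edgeSet := hC.trans (congrArg (· ∪ E.draw p.edgeSet) himage)
  refine ⟨hS.exists_closed_param hle hp, fun z _ => ?_⟩
  rw [← Nat.card_eq_fintype_card]
  exact PlaneEmbedding.card_lt_of_not_isHeavy (hlight z)
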